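/- arXiv:2505.10955 — 9 statements merged into one kernel-verified Lean document; each statement's English description precedes it below -/
import Mathlib

section
/- Let f : [0,1] → ℝ be continuous. Then for every x ∈ [0,1] one has the Faber representation f(x) = f(0)·(1 − x) + f(1)·x − (1/2) Σ_{j=0}^{∞} Σ_{k=0}^{2^j − 1} Δ²_{2^{−j−1}} f(2^{−j} k) · v_{j,k}(x), in the sense that the partial sums S_J(x) = f(0)(1 − x) + f(1)x − (1/2) Σ_{j=0}^{J−1} Σ_{k=0}^{2^j − 1} Δ²_{2^{−j−1}} f(2^{−j} k) v_{j,k}(x) converge to f(x) as J → ∞. -/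
open scoped BigOperators ENNReal

/-- Second order difference operator: `Δ²_h f(t) = f(t+2h) − 2f(t+h) + f(t)`. -/
noncomputable def delta2 (f : ℝ → ℝ) (h t : ℝ) : ℝ := f (t + 2*h) - 2 * f (t + h) + f t

/-- The Faber hat function `v_{j,k}` for level `j ≥ 0`. -/
noncomputable def hatFn (j k : ℤ) (x : ℝ) : ℝ :=
  if (2:ℝ)^(-j) * (k:ℝ) ≤ x ∧ x ≤ (2:ℝ)^(-j) * ((k:ℝ) + 1/2) then
    (2:ℝ)^(j+1) * (x - (2:ℝ)^(-j) * (k:ℝ))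
  else if (2:ℝ)^(-j) * ((k:ℝ) + 1/2) ≤ x ∧ x ≤ (2:ℝ)^(-j) * ((k:ℝ) + 1) then
    (2:ℝ)^(j+1) * ((2:ℝ)^(-j) * ((k:ℝ) + 1) - x)
  else 0

/-- The Faber hat function `v_{j,k}`, including the level `j = −1`
(`v_{−1,k}(x) = max(1 − |x − k|, 0)`). -/
noncomputable def faberV (j k : ℤ) (x : ℝ) : ℝ :=
  if j = -1 then max (1 - |x - (k:ℝ)|) 0 else hatFn j k x


lemma hat_scaled (j k : ℕ) (x : ℝ) : hatFn (j:ℤ) (k:ℤ) x =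
    if (k:ℝ) ≤ 2^j * x ∧ 2^j * x ≤ k + 1/2 then 2 * (2^j * x - k)
    else if (k:ℝ) + 1/2 ≤ 2^j * x ∧ 2^j * x ≤ k + 1 then 2 * (k + 1 - 2^j * x) else 0 := by
  have hp : (0:ℝ) < 2^j := by positivity
  have h1 : ∀ a : ℝ, (2:ℝ)^(-(j:ℤ)) * a ≤ x ↔ a ≤ 2^j * x := by
    intro a
    rw [zpow_neg, zpow_natCast, inv_mul_le_iff₀ hp]
  have h2 : ∀ a : ℝ, x ≤ (2:ℝ)^(-(j:ℤ)) * a ↔ 2^j * x ≤ a := by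
    intro a
    rw [zpow_neg, zpow_natCast, le_inv_mul_iff₀ hp]
  unfold hatFn
  simp only [Int.cast_natCast, h1, h2]
  have e : (2:ℝ)^((j:ℤ)+1) = 2 * 2^j := by
    rw [zpow_add₀ (by norm_num), zpow_natCast, zpow_one]; ring
  have e2 : (2:ℝ)^(-(j:ℤ)) = (2^j)⁻¹ := by rw [zpow_neg, zpow_natCast]
  rw [e, e2]
  split_ifs
  · field_simp
  · field_simp
  · rfl

lemma hat_zero (j k m : ℕ) (x : ℝ) (h : k ≠ m) (h1 : (m:ℝ) ≤ 2^j * x) (h2 : 2^j * x ≤ m + 1) :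
    hatFn (j:ℤ) (k:ℤ) x = 0 := by
  rw [hat_scaled]
  rcases lt_or_gt_of_ne h with h | h
  · have : (k:ℝ) + 1 ≤ m := by exact_mod_cast h
    split_ifs with a b
    · linarith [a.2]
    · linarith [b.2]
    · rfl
  · have : (m:ℝ) + 1 ≤ k := by exact_mod_cast h
    split_ifs with a b
    · linarith [a.1]
    · linarith [b.1]
    · rfl

lemma faber_partial (f : ℝ → ℝ) (x : ℝ) (J : ℕ) : ∀ m : ℕ, m < 2^J → (m:ℝ) ≤ 2^J * x →
    2^J * x ≤ m + 1 →
    f 0 * (1 - x) + f 1 * x -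
        (1/2) * ∑ j ∈ Finset.range J, ∑ k ∈ Finset.range (2^j),
          delta2 f ((2:ℝ)^(-(j:ℤ)-1)) ((2:ℝ)^(-(j:ℤ)) * (k:ℝ)) * hatFn (j:ℤ) (k:ℤ) x
    = f ((m:ℝ) / 2^J) * (m + 1 - 2^J * x) + f (((m:ℝ) + 1) / 2^J) * (2^J * x - m) := by
  induction J with
  | zero =>
    intro m hm h1 h2
    have : m = 0 := by simpa using hm
    subst this
    simp
  | succ J ih =>
    intro m' hm h1 h2
    have hp : (0:ℝ) < 2^J := by positivity
    rw [pow_succ] at hm h1 h2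
    obtain ⟨m, hmm⟩ : ∃ m, m' = 2 * m ∨ m' = 2 * m + 1 := ⟨m' / 2, by omega⟩
    have hm2 : m < 2^J := by omega
    have g1 : (m:ℝ) ≤ 2^J * x := by
      rcases hmm with rfl | rfl <;> push_cast at h1 <;> linarith
    have g2 : 2^J * x ≤ m + 1 := by
      rcases hmm with rfl | rfl <;> push_cast at h2 <;> linarith
    rw [Finset.sum_range_succ, mul_add, ← sub_sub, ih m hm2 g1 g2,
      Finset.sum_eq_single_of_mem m (by simpa using hm2)
        (fun k _ hk => by rw [hat_zero J k m x hk g1 g2, mul_zero]), hat_scaled]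
    have e2 : (2:ℝ)^(-(J:ℤ)) = (2^J)⁻¹ := by rw [zpow_neg, zpow_natCast]
    have e3 : (2:ℝ)^(-(J:ℤ)-1) = (2^J)⁻¹ / 2 := by
      rw [zpow_sub₀ (by norm_num), e2, zpow_one]
    unfold delta2
    rw [e2, e3]
    have a1 : ((2:ℝ)^J)⁻¹ * m + 2 * ((2^J)⁻¹ / 2) = (m + 1) / 2^J := by field_simp
    have a2 : ((2:ℝ)^J)⁻¹ * m + ((2^J)⁻¹ / 2) = (2 * m + 1) / 2^(J+1) := by
      rw [pow_succ]; field_simp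
    have a3 : ((2:ℝ)^J)⁻¹ * m = m / 2^J := by field_simp
    rw [a1, a2, a3]
    rcases hmm with rfl | rfl
    · push_cast at h1 h2 ⊢
      have b1 : (2 * (m:ℝ)) / 2^(J+1) = m / 2^J := by rw [pow_succ]; field_simp
      rw [if_pos ⟨by linarith, by linarith⟩, b1, pow_succ]
      ring
    · push_cast at h1 h2 ⊢
      have b1 : (2 * (m:ℝ) + 1 + 1) / 2^(J+1) = (m + 1) / 2^J := by
        rw [pow_succ]; field_simp; ring
      have b2 : (if (m:ℝ) ≤ 2^J * x ∧ 2^J * x ≤ m + 1/2 then 2 * (2^J * x - m)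
          else if (m:ℝ) + 1/2 ≤ 2^J * x ∧ 2^J * x ≤ m + 1 then 2 * (m + 1 - 2^J * x) else 0)
          = 2 * (m + 1 - 2^J * x) := by
        split_ifs with c d
        · linarith [c.2]
        · rfl
        · exact absurd ⟨by linarith, by linarith⟩ d
      rw [b2, b1, pow_succ]
      ring

theorem faber_representation (f : ℝ → ℝ) (hf : ContinuousOn f (Set.Icc 0 1))
    (x : ℝ) (hx : x ∈ Set.Icc (0:ℝ) 1) :
    Filter.Tendsto
      (fun J : ℕ => f 0 * (1 - x) + f 1 * x -
        (1/2) * ∑ j ∈ Finset.range J, ∑ k ∈ Finset.range (2^j),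
          delta2 f ((2:ℝ)^(-(j:ℤ)-1)) ((2:ℝ)^(-(j:ℤ)) * (k:ℝ)) * hatFn (j:ℤ) (k:ℤ) x)
      Filter.atTop (nhds (f x)) := by
  rw [Metric.tendsto_atTop]
  intro ε hε
  obtain ⟨δ, hδ, hd⟩ := Metric.continuousOn_iff.1 hf x hx ε hε
  obtain ⟨N, hN⟩ := exists_pow_lt_of_lt_one hδ (by norm_num : (1/2:ℝ) < 1)
  refine ⟨N, fun J hJ => ?_⟩
  have hp : (0:ℝ) < 2^J := by positivity
  have hJδ : 1 < δ * 2^J := by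
    have h1 : (1/2:ℝ)^J ≤ (1/2)^N := pow_le_pow_of_le_one (by norm_num) (by norm_num) hJ
    have h2 : (1/2:ℝ)^J < δ := lt_of_le_of_lt h1 hN
    rw [one_div, inv_pow, ← one_div, div_lt_iff₀ hp] at h2
    exact h2
  obtain ⟨hx0, hx1⟩ := hx
  obtain ⟨m, hm, h1, h2⟩ : ∃ m : ℕ, m < 2^J ∧ (m:ℝ) ≤ 2^J * x ∧ 2^J * x ≤ m + 1 := by
    rcases hx1.lt_or_eq with h | h
    · have h0 : 0 ≤ 2^J * x := by positivity
      refine ⟨⌊2^J * x⌋₊, ?_, Nat.floor_le h0, (Nat.lt_floor_add_one _).le⟩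
      rw [Nat.floor_lt h0]
      push_cast
      nlinarith
    · have : 1 ≤ 2^J := Nat.one_le_two_pow
      refine ⟨2^J - 1, by omega, ?_, ?_⟩ <;> rw [Nat.cast_sub this] <;> simp [h]
  have hm' : (m:ℝ) + 1 ≤ 2^J := by exact_mod_cast hm
  have hm0 : (0:ℝ) ≤ m := by positivity
  rw [faber_partial f x J m hm h1 h2]
  have key : ∀ a : ℝ, 0 ≤ a → a ≤ 2^J → |a - 2^J * x| ≤ 1 → |f (a / 2^J) - f x| < ε := by
    intro a ha0 ha1 hax
    refine hd (a / 2^J) ⟨by positivity, by rwa [div_le_one hp]⟩ ?_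
    have : a / 2^J - x = (a - 2^J * x) / 2^J := by field_simp
    rw [Real.dist_eq, this, abs_div, abs_of_pos hp, div_lt_iff₀ hp]
    linarith
  have k1 := abs_lt.1 (key m hm0 (by linarith) (abs_le.2 ⟨by linarith, by linarith⟩))
  have k2 := abs_lt.1 (key (m+1) (by linarith) hm' (abs_le.2 ⟨by linarith, by linarith⟩))
  rw [Real.dist_eq, abs_lt]
  generalize f ((m:ℝ) / 2^J) = A at *
  generalize f (((m:ℝ)+1) / 2^J) = B at *
  obtain ⟨t, ht⟩ : ∃ t, t = 2^J * x - m := ⟨_, rfl⟩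
  have e : (m:ℝ) + 1 - 2^J * x = 1 - t := by rw [ht]; ring
  rw [e, ← ht]
  have t0 : 0 ≤ t := by linarith
  have t1 : t ≤ 1 := by linarith
  have t1' : 0 ≤ 1 - t := by linarith
  rcases t0.eq_or_lt with h | h
  · subst h; constructor <;> linarith
  · constructor <;> nlinarith [mul_nonneg t1' (sub_nonneg.2 k1.1.le), mul_nonneg t1' (sub_nonneg.2 k1.2.le), mul_pos h (sub_pos.2 k2.1), mul_pos h (sub_pos.2 k2.2)]
end

section
/- Let g : ℝ → ℝ be twice continuously differentiable with g'' square-integrable on ℝ. Then for every j ∈ ℕ₀, Σ_{k∈ℤ} |Δ²_{2^{−j−1}} g(2^{−j} k)|² ≤ 2^{−3j} ∫_ℝ g''(t)² dt. -/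
open scoped BigOperators ENNReal

theorem aux_one (g : ℝ → ℝ) (hg : ContDiff ℝ 2 g) (h t : ℝ) (hh : 0 < h) :
    (delta2 g h t)^2 ≤ 2 * h^3 * ∫ s in t..(t+2*h), (iteratedDeriv 2 g s)^2 := by
  have hc : Continuous (iteratedDeriv 2 g) := hg.continuous_iteratedDeriv 2 le_rfl
  have hd : Differentiable ℝ g := hg.differentiable (by norm_num)
  have hd2 : ∀ x, HasDerivAt (deriv g) (iteratedDeriv 2 g x) x := by
    intro x
    have h1 : Differentiable ℝ (iteratedDeriv 1 g) :=
      hg.differentiable_iteratedDeriv 1 (by norm_num)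
    rw [iteratedDeriv_succ, iteratedDeriv_one]
    rw [iteratedDeriv_one] at h1
    exact (h1 x).hasDerivAt
  have hdisc : ∀ x, HasDerivAt (fun s => g (s + h) - g s) (deriv g (x + h) - deriv g x) x := by
    intro x
    exact ((hd (x+h)).hasDerivAt.comp_add_const x h).sub (hd x).hasDerivAt
  set A := ∫ s in t..(t+2*h), |iteratedDeriv 2 g s| with hA
  have hA0 : 0 ≤ A := intervalIntegral.integral_nonneg (by linarith) (fun _ _ => abs_nonneg _)
  have hb : ∀ x ∈ Set.Icc t (t+h), ‖deriv g (x + h) - deriv g x‖ ≤ A := by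
    intro x hx
    have e : ∫ s in x..(x+h), iteratedDeriv 2 g s = deriv g (x+h) - deriv g x :=
      intervalIntegral.integral_eq_sub_of_hasDerivAt (fun y _ => hd2 y) (hc.intervalIntegrable _ _)
    rw [← e, Real.norm_eq_abs]
    refine (intervalIntegral.abs_integral_le_integral_abs (by linarith)).trans ?_
    exact intervalIntegral.integral_mono_interval hx.1 (by linarith) (by linarith [hx.2])
      (Filter.Eventually.of_forall fun _ => abs_nonneg _) (hc.abs.intervalIntegrable _ _)
  have h1 := (convex_Icc t (t+h)).norm_image_sub_le_of_norm_hasDerivWithin_le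
    (fun x _ => (hdisc x).hasDerivWithinAt) hb (x := t) (y := t+h)
    ⟨le_rfl, by linarith⟩ ⟨by linarith, le_rfl⟩
  have h2 : |delta2 g h t| ≤ A * h := by
    have e : delta2 g h t = (g (t + h + h) - g (t+h)) - (g (t+h) - g t) := by
      unfold delta2; rw [show t + 2*h = t+h+h by ring]; ring
    rw [e]
    simpa [Real.norm_eq_abs, abs_of_pos hh] using h1
  have h3 : A^2 ≤ 2*h * ∫ s in t..(t+2*h), (iteratedDeriv 2 g s)^2 := by
    have i1 : IntervalIntegrable (fun s => (iteratedDeriv 2 g s)^2) MeasureTheory.volume t (t+2*h) :=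
      (hc.pow 2).intervalIntegrable _ _
    have i2 : IntervalIntegrable (fun s => 2 * (A/(2*h)) * |iteratedDeriv 2 g s|)
      MeasureTheory.volume t (t+2*h) := (hc.abs.const_mul _).intervalIntegrable _ _
    have p : 0 ≤ ∫ s in t..(t+2*h), ((iteratedDeriv 2 g s)^2
        - 2 * (A/(2*h)) * |iteratedDeriv 2 g s| + (A/(2*h))^2) := by
      refine intervalIntegral.integral_nonneg (by linarith) (fun s _ => ?_)
      have := sq_nonneg (|iteratedDeriv 2 g s| - A/(2*h))
      have e := sq_abs (iteratedDeriv 2 g s)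
      nlinarith
    rw [intervalIntegral.integral_add (i1.sub i2) (by simp), intervalIntegral.integral_sub i1 i2,
      intervalIntegral.integral_const_mul, ← hA, intervalIntegral.integral_const] at p
    have e : 2*h*(A/(2*h)) = A := by field_simp
    simp only [smul_eq_mul] at p
    have p2 := mul_nonneg (by linarith : (0:ℝ) ≤ 2*h) p
    have e2 : (2*h) * (2 * (A/(2*h)) * A) = 2*A^2 := by field_simp
    have e3 : (2*h) * ((t+2*h-t) * (A/(2*h))^2) = A^2 := by field_simp; ring
    rw [mul_add, mul_sub, e2, e3] at p2
    linarith
  calc (delta2 g h t)^2 = |delta2 g h t|^2 := (sq_abs _).symm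
    _ ≤ (A*h)^2 := by gcongr
    _ = h^2 * A^2 := by ring
    _ ≤ h^2 * (2*h * ∫ s in t..(t+2*h), (iteratedDeriv 2 g s)^2) := by gcongr
    _ = _ := by ring

/-- for `g ∈ C²(ℝ)` with `g''` square-integrable and `j ∈ ℕ₀`,
`Σ_{k∈ℤ} |Δ²_{2^{−j−1}} g(2^{−j}k)|² ≤ 2^{−3j} ∫_ℝ g''(t)² dt`
(the left-hand side is taken in `[0,∞]`, so the inequality includes summability). -/
theorem sum_sq_delta2_le (g : ℝ → ℝ) (hg : ContDiff ℝ 2 g)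
    (hg2 : MeasureTheory.Integrable (fun t => (iteratedDeriv 2 g t)^2)) (j : ℕ) :
    ∑' k : ℤ, ENNReal.ofReal ((delta2 g ((2:ℝ)^(-(j:ℤ)-1)) ((2:ℝ)^(-(j:ℤ)) * (k:ℝ)))^2)
      ≤ ENNReal.ofReal ((2:ℝ)^(-(3*(j:ℤ))) * ∫ t : ℝ, (iteratedDeriv 2 g t)^2) := by
  have hD : (0:ℝ) < (2:ℝ)^(-(j:ℤ)) := by positivity
  have hh : (2:ℝ)^(-(j:ℤ)-1) = (2:ℝ)^(-(j:ℤ)) / 2 := by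
    rw [zpow_sub₀ (by norm_num), zpow_one]
  have h3 : (2:ℝ)^(-(3*(j:ℤ))) = ((2:ℝ)^(-(j:ℤ)))^3 := by
    rw [← zpow_natCast, ← zpow_mul]; congr 1; push_cast; ring
  rw [hh, h3]
  set D := (2:ℝ)^(-(j:ℤ)) with hDdef
  set F : ℝ → ℝ := fun t => (iteratedDeriv 2 g t)^2 with hF
  have hF0 : ∀ t, 0 ≤ F t := fun t => sq_nonneg _
  have hterm : ∀ k : ℤ, ENNReal.ofReal ((delta2 g (D/2) (D * (k:ℝ)))^2) ≤
      ENNReal.ofReal (D^3) *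
        ∫⁻ t in Set.Ioc (k • D) ((k+1) • D), ENNReal.ofReal (F t) := by
    intro k
    have h1 := aux_one g hg (D/2) (D*k) (by positivity)
    rw [← MeasureTheory.ofReal_integral_eq_lintegral_ofReal hg2.integrableOn
      (Filter.Eventually.of_forall hF0), ← ENNReal.ofReal_mul (by positivity)]
    apply ENNReal.ofReal_le_ofReal
    rw [intervalIntegral.integral_of_le (by linarith)] at h1
    have e1 : k • D = D * k := by rw [zsmul_eq_mul]; ring
    have e2 : (k+1) • D = D * k + 2 * (D/2) := by rw [zsmul_eq_mul]; push_cast; ring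
    rw [e1, e2]
    refine h1.trans ?_
    have : 0 ≤ ∫ s in Set.Ioc (D * (k:ℝ)) (D * k + 2 * (D/2)), F s :=
      MeasureTheory.integral_nonneg hF0
    refine mul_le_mul_of_nonneg_right ?_ this
    have : 0 < D^3 := by positivity
    nlinarith
  refine (ENNReal.tsum_le_tsum hterm).trans ?_
  rw [ENNReal.tsum_mul_left, ENNReal.ofReal_mul (by positivity),
    MeasureTheory.ofReal_integral_eq_lintegral_ofReal hg2 (Filter.Eventually.of_forall hF0)]
  gcongr
  rw [← MeasureTheory.lintegral_iUnion (fun _ => measurableSet_Ioc)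
    (Set.pairwise_disjoint_Ioc_zsmul D)]
  exact MeasureTheory.setLIntegral_le_lintegral _ _
end

section
/- There exists a constant C > 0 such that for every twice continuously differentiable f : ℝ → ℝ with f and f'' square-integrable on ℝ the following two inequalities hold: (i) Σ_{k∈ℤ} f(k)² ≤ C (∫_ℝ f(t)² dt + ∫_ℝ f''(t)² dt); (ii) for every j ∈ ℕ₀, 2^{3j} Σ_{k∈ℤ} |(1/2) Δ²_{2^{−j−1}} f(2^{−j}k)|² ≤ C (∫_ℝ f(t)² dt + ∫_ℝ f''(t)² dt). In other words, the univariate dyadic norm sup_{j∈{−1,0,1,2,…}} 2^{3|j|/2} (Σ_{k∈ℤ} |d_{j,k}(f)|²)^{1/2} is bounded by a constant times (‖f‖²_{L²(ℝ)} + ‖f''‖²_{L²(ℝ)})^{1/2}. -/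
open scoped BigOperators ENNReal

open MeasureTheory in
lemma faux_sum (F : ℝ → ℝ) (hF : Integrable F) (h0 : ∀ x, 0 ≤ F x) (c : ℝ) (hc : 0 < c) :
    ∑' k : ℤ, ENNReal.ofReal (∫ t in (c * (k:ℝ))..(c * (k:ℝ) + c), F t)
      ≤ ENNReal.ofReal (∫ t, F t) := by
  have e : ∀ k : ℤ, ENNReal.ofReal (∫ t in (c * (k:ℝ))..(c * (k:ℝ) + c), F t)
      = ∫⁻ t in Set.Ioc (k • c) ((k + 1) • c), ENNReal.ofReal (F t) := by
    intro k
    rw [intervalIntegral.integral_of_le (by linarith),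
      ofReal_integral_eq_lintegral_ofReal hF.integrableOn (ae_of_all _ h0)]
    congr 3
    · simp [mul_comm]
    · simp; ring
  simp_rw [e]
  rw [← lintegral_iUnion (fun _ => measurableSet_Ioc) (Set.pairwise_disjoint_Ioc_zsmul c),
    ofReal_integral_eq_lintegral_ofReal hF (ae_of_all _ h0)]
  exact setLIntegral_le_lintegral _ _

lemma faux_cs (g : ℝ → ℝ) (hg : Continuous g) (a b : ℝ) (hab : a < b) :
    (∫ t in a..b, g t)^2 ≤ (b - a) * ∫ t in a..b, g t ^ 2 := by
  set I := ∫ t in a..b, g t with hI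
  have hd : 0 < b - a := by linarith
  have h1 : 0 ≤ ∫ t in a..b, ((b - a) * g t - I)^2 :=
    intervalIntegral.integral_nonneg hab.le (fun _ _ => sq_nonneg _)
  have h2 : ∫ t in a..b, ((b - a) * g t - I)^2
      = (b-a)^2 * (∫ t in a..b, g t ^ 2) - (2 * (b-a) * I) * I + (b-a) * I^2 := by
    have : ∀ t, ((b - a) * g t - I)^2 = (b-a)^2 * g t ^ 2 - (2 * (b-a) * I) * g t + I^2 := by
      intro t; ring
    simp_rw [this]
    rw [intervalIntegral.integral_add, intervalIntegral.integral_sub,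
      intervalIntegral.integral_const_mul, intervalIntegral.integral_const_mul,
      intervalIntegral.integral_const, ← hI, smul_eq_mul]
    all_goals exact Continuous.intervalIntegrable (by fun_prop) _ _
  rw [h2] at h1
  by_contra! hlt
  nlinarith

lemma faux_main (G g p : ℝ → ℝ) (hG : ∀ t, HasDerivAt G (g t) t) (hg : Continuous g)
    (hp : Continuous p) (a b : ℝ) (hab : a < b) (hb : ∀ t ∈ Set.Icc a b, g t ^ 2 ≤ p t) :
    (G b - G a)^2 ≤ (b - a) * ∫ t in a..b, p t := by
  rw [← intervalIntegral.integral_eq_sub_of_hasDerivAt (fun t _ => hG t)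
    (hg.intervalIntegrable _ _)]
  refine (faux_cs g hg a b hab).trans ?_
  refine mul_le_mul_of_nonneg_left ?_ (by linarith)
  exact intervalIntegral.integral_mono_on hab.le
    ((hg.pow 2).intervalIntegrable _ _) (hp.intervalIntegrable _ _) hb

lemma faux_one (f f1 f2 : ℝ → ℝ) (h1 : ∀ t, HasDerivAt f (f1 t) t)
    (h2 : ∀ t, HasDerivAt f1 (f2 t) t) (hc : Continuous f2) (a : ℝ) :
    f a ^ 2 ≤ ∫ t in a..(a+1), (32 * f t ^ 2 + 2 * f2 t ^ 2) := by
  have hf : Continuous f := continuous_iff_continuousAt.2 fun t => (h1 t).continuousAt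
  have key := faux_main
    (fun s => (s - a) * (a + 1 - s)^2 * f1 s - ((a + 1 - s)^2 - 2 * (s - a) * (a + 1 - s)) * f s)
    (fun s => (s - a) * (a + 1 - s)^2 * f2 s - (6 * (s - a) - 4) * f s)
    (fun t => 32 * f t ^ 2 + 2 * f2 t ^ 2) ?_ (by fun_prop) (by fun_prop) a (a+1) (by linarith) ?_
  · simpa using key
  · intro s
    have i := hasDerivAt_id s
    have u := i.sub_const a
    have v := i.const_sub (a+1)
    have := (((u.mul (v.pow 2)).mul (h2 s))).sub
      (((v.pow 2).sub ((u.const_mul 2).mul v)).mul (h1 s))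
    refine HasDerivAt.congr_deriv this ?_
    simp
    ring
  · rintro s ⟨hs1, hs2⟩
    obtain ⟨x, rfl⟩ : ∃ x, s = a + x := ⟨s - a, by ring⟩
    have x0 : 0 ≤ x := by linarith
    have x1 : x ≤ 1 := by linarith
    simp only [add_sub_cancel_left, add_sub_add_left_eq_sub]
    generalize f (a+x) = y
    generalize f2 (a+x) = z
    have w0 : 0 ≤ x * (1-x)^2 := by positivity
    have w1 : x * (1-x)^2 ≤ 1 := by
      have : (1-x)^2 ≤ 1 := by nlinarith
      nlinarith
    have w2 : (x * (1-x)^2)^2 ≤ 1 := by nlinarith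
    have q : (6*x-4)^2 ≤ 16 := by nlinarith
    nlinarith [sq_nonneg (x * (1-x)^2 * z + (6*x-4) * y),
      mul_le_mul_of_nonneg_right w2 (sq_nonneg z), mul_le_mul_of_nonneg_right q (sq_nonneg y)]

lemma faux_two (f f1 f2 : ℝ → ℝ) (h1 : ∀ t, HasDerivAt f (f1 t) t)
    (h2 : ∀ t, HasDerivAt f1 (f2 t) t) (hc : Continuous f2) (a h : ℝ) (hh : 0 < h) :
    delta2 f h a ^ 2 ≤ 2 * h^3 * ∫ t in a..(a+2*h), f2 t ^ 2 := by
  have k1 := faux_main (fun s => (s - a) * f1 s - f s) (fun s => (s - a) * f2 s)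
    (fun t => h^2 * f2 t ^ 2) ?_ (by fun_prop) (by fun_prop) a (a+h) (by linarith) ?_
  · have k2 := faux_main (fun s => (a + 2*h - s) * f1 s + f s) (fun s => (a + 2*h - s) * f2 s)
      (fun t => h^2 * f2 t ^ 2) ?_ (by fun_prop) (by fun_prop) (a+h) (a+2*h) (by linarith) ?_
    · rw [intervalIntegral.integral_const_mul] at k1 k2
      have hq : Continuous (fun t => f2 t ^ 2) := hc.pow 2
      rw [← intervalIntegral.integral_add_adjacent_intervals (b := a + h)
        (hq.intervalIntegrable _ _) (hq.intervalIntegrable _ _)]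
      simp only [delta2]
      ring_nf at k1 k2 ⊢
      nlinarith [sq_nonneg ((h * f1 (a+h) - f (a+h) + f a) - (f (a+h*2) - h * f1 (a+h) - f (a+h)))]
    · intro s
      have v := (hasDerivAt_id s).const_sub (a+2*h)
      refine HasDerivAt.congr_deriv ((v.mul (h2 s)).add (h1 s)) ?_
      simp
    · rintro s ⟨hs1, hs2⟩
      rw [mul_pow]
      exact mul_le_mul_of_nonneg_right (by nlinarith) (sq_nonneg _)
  · intro s
    have v := (hasDerivAt_id s).sub_const a
    refine HasDerivAt.congr_deriv ((v.mul (h2 s)).sub (h1 s)) ?_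
    simp
  · rintro s ⟨hs1, hs2⟩
    rw [mul_pow]
    exact mul_le_mul_of_nonneg_right (by nlinarith) (sq_nonneg _)

/-- univariate Faber coefficient decay, `H²(ℝ)`:
there is `C > 0` such that for all `f ∈ C²(ℝ)` with `f, f'' ∈ L²(ℝ)`:
(i) `Σ_{k∈ℤ} f(k)² ≤ C(‖f‖²_{L²} + ‖f''‖²_{L²})`, and
(ii) for every `j ∈ ℕ₀`, `2^{3j} Σ_{k∈ℤ} |(1/2)Δ²_{2^{−j−1}} f(2^{−j}k)|²
≤ C(‖f‖²_{L²} + ‖f''‖²_{L²})` (sums taken in `[0,∞]`). -/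
theorem faber_coefficient_decay_real_line :
    ∃ C : ℝ, 0 < C ∧ ∀ f : ℝ → ℝ, ContDiff ℝ 2 f →
      MeasureTheory.Integrable (fun t => f t ^ 2) →
      MeasureTheory.Integrable (fun t => (iteratedDeriv 2 f t)^2) →
      (∑' k : ℤ, ENNReal.ofReal (f (k:ℝ) ^ 2)
          ≤ ENNReal.ofReal (C * ((∫ t : ℝ, f t ^ 2) + ∫ t : ℝ, (iteratedDeriv 2 f t)^2))) ∧
      (∀ j : ℕ,
        (2:ℝ≥0∞)^(3*j) *
            ∑' k : ℤ, ENNReal.ofReal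
              (((1/2) * delta2 f ((2:ℝ)^(-(j:ℤ)-1)) ((2:ℝ)^(-(j:ℤ)) * (k:ℝ)))^2)
          ≤ ENNReal.ofReal (C * ((∫ t : ℝ, f t ^ 2) + ∫ t : ℝ, (iteratedDeriv 2 f t)^2))) := by
  refine ⟨32, by norm_num, fun f hf hi hi2 => ?_⟩
  have e2 : iteratedDeriv 2 f = deriv (deriv f) := by
    rw [iteratedDeriv_succ, iteratedDeriv_one]
  have hc : Continuous (iteratedDeriv 2 f) := hf.continuous_iteratedDeriv 2 le_rfl
  have h1 : ∀ t, HasDerivAt f (deriv f t) t := fun t =>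
    (hf.differentiable (by norm_num) t).hasDerivAt
  have h2 : ∀ t, HasDerivAt (deriv f) (iteratedDeriv 2 f t) t := fun t => by
    rw [e2]
    have := hf.differentiable_iteratedDeriv 1 (by norm_num)
    rw [iteratedDeriv_one] at this
    exact (this t).hasDerivAt
  generalize iteratedDeriv 2 f = f2 at *
  have p1 : 0 ≤ ∫ t, f t ^ 2 := MeasureTheory.integral_nonneg fun t => sq_nonneg _
  have p2 : 0 ≤ ∫ t, f2 t ^ 2 := MeasureTheory.integral_nonneg fun t => sq_nonneg _
  refine ⟨?_, fun j => ?_⟩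
  · have s := faux_sum (fun t => 32 * f t ^ 2 + 2 * f2 t ^ 2)
      ((hi.const_mul 32).add (hi2.const_mul 2)) (fun t => by positivity) 1 one_pos
    refine le_trans (ENNReal.tsum_le_tsum fun k => ?_) (s.trans ?_)
    · refine ENNReal.ofReal_le_ofReal ?_
      simpa using faux_one f (deriv f) f2 h1 h2 hc k
    · refine ENNReal.ofReal_le_ofReal ?_
      rw [MeasureTheory.integral_add (hi.const_mul 32) (hi2.const_mul 2),
        MeasureTheory.integral_const_mul, MeasureTheory.integral_const_mul]
      linarith
  · have c0 : (0:ℝ) < (2:ℝ)^(-(j:ℤ)) := by positivity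
    have s := faux_sum (fun t => f2 t ^ 2) hi2 (fun t => by positivity) _ c0
    rw [← ENNReal.tsum_mul_left]
    refine le_trans (ENNReal.tsum_le_tsum fun k => ?_) (s.trans ?_)
    · have e : (2:ℝ≥0∞)^(3*j) = ENNReal.ofReal ((2:ℝ)^(3*j)) := by
        rw [ENNReal.ofReal_pow (by norm_num)]; simp
      rw [e, ← ENNReal.ofReal_mul (by positivity)]
      refine ENNReal.ofReal_le_ofReal ?_
      have hh : (2:ℝ)^(-(j:ℤ)-1) = (2:ℝ)^(-(j:ℤ)) / 2 := by
        rw [zpow_sub₀ (by norm_num), zpow_one]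
      have hp : (2:ℝ)^(3*j) * ((2:ℝ)^(-(j:ℤ)))^3 = 1 := by
        rw [mul_comm 3 j, pow_mul, ← mul_pow, zpow_neg, zpow_natCast,
          mul_inv_cancel₀ (by positivity), one_pow]
      rw [hh]
      generalize (2:ℝ)^(-(j:ℤ)) = c at *
      have := faux_two f (deriv f) f2 h1 h2 hc (c * k) (c/2) (by positivity)
      rw [mul_div_cancel₀ c two_ne_zero] at this
      have q : 0 ≤ ∫ t in (c * (k:ℝ))..(c * (k:ℝ) + c), f2 t ^ 2 :=
        intervalIntegral.integral_nonneg (by linarith) (fun _ _ => sq_nonneg _)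
      generalize (∫ t in (c * (k:ℝ))..(c * (k:ℝ) + c), f2 t ^ 2) = J at *
      calc (2:ℝ)^(3*j) * (1/2 * delta2 f (c/2) (c*k))^2
          = (2:ℝ)^(3*j) / 4 * (delta2 f (c/2) (c*k))^2 := by ring
        _ ≤ (2:ℝ)^(3*j) / 4 * (2 * (c/2)^3 * J) :=
          mul_le_mul_of_nonneg_left this (by positivity)
        _ = ((2:ℝ)^(3*j) * c^3) * (J / 16) := by ring
        _ ≤ J := by rw [hp]; linarith
    · exact ENNReal.ofReal_le_ofReal (by linarith)
end

section
/- There exists a constant C > 0 such that for every twice continuously differentiable f : ℝ → ℝ one has max( (f(0)² + f(1)²)^{1/2}, sup_{j∈ℕ₀} 2^{3j/2} (Σ_{k=0}^{2^j − 1} |(1/2) Δ²_{2^{−j−1}} f(2^{−j}k)|²)^{1/2} ) ≤ C ( (∫_0^1 f(t)² dt)^{1/2} + (∫_0^1 f''(t)² dt)^{1/2} ). -/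
open scoped BigOperators ENNReal

theorem aux_cs (g : ℝ → ℝ) (hg : Continuous g) (a b : ℝ) (hab : a ≤ b) :
    (∫ t in a..b, g t) ^ 2 ≤ (b - a) * ∫ t in a..b, g t ^ 2 := by
  rcases hab.eq_or_lt with rfl | h
  · simp
  have hpos : 0 < b - a := sub_pos.2 h
  set I := ∫ t in a..b, g t with hI
  have h0 : 0 ≤ ∫ t in a..b, ((b - a) * g t - I) ^ 2 :=
    intervalIntegral.integral_nonneg hab (fun t _ => sq_nonneg _)
  have h1 : ∫ t in a..b, ((b - a) * g t - I) ^ 2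
      = (b - a) ^ 2 * (∫ t in a..b, g t ^ 2) - 2 * (b - a) * I * I + (b - a) * I ^ 2 := by
    have e : ∀ t, ((b - a) * g t - I) ^ 2
        = (b - a) ^ 2 * g t ^ 2 - 2 * (b - a) * I * g t + I ^ 2 := fun t => by ring
    simp_rw [e]
    rw [intervalIntegral.integral_add, intervalIntegral.integral_sub,
      intervalIntegral.integral_const_mul, intervalIntegral.integral_const_mul,
      intervalIntegral.integral_const, ← hI, smul_eq_mul]
    all_goals exact Continuous.intervalIntegrable (by fun_prop) _ _
  rw [h1] at h0
  have h2 : 0 ≤ (b - a) * ((b - a) * (∫ t in a..b, g t ^ 2) - I ^ 2) := by linarith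
  have := nonneg_of_mul_nonneg_right h2 hpos
  linarith

theorem aux_mono (g : ℝ → ℝ) (hg : Continuous g) {a b c d : ℝ} (hab : a ≤ b) (hca : c ≤ a)
    (hbd : b ≤ d) : ∫ t in a..b, g t ^ 2 ≤ ∫ t in c..d, g t ^ 2 :=
  intervalIntegral.integral_mono_interval hca hab hbd
    (Filter.Eventually.of_forall fun t => sq_nonneg _)
    (Continuous.intervalIntegrable (by fun_prop) _ _)

theorem aux_deriv (f : ℝ → ℝ) (hf : ContDiff ℝ 2 f) {a b c d : ℝ} (hab : a ≤ b) (hca : c ≤ a)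
    (hbd : b ≤ d) :
    (deriv f b - deriv f a) ^ 2 ≤ (d - c) * ∫ t in c..d, iteratedDeriv 2 f t ^ 2 := by
  have hg : Continuous (iteratedDeriv 2 f) := hf.continuous_iteratedDeriv 2 le_rfl
  have hd : ∀ x, HasDerivAt (deriv f) (iteratedDeriv 2 f x) x := by
    intro x
    have h1 : Differentiable ℝ (iteratedDeriv 1 f) :=
      hf.differentiable_iteratedDeriv 1 (by norm_num)
    rw [iteratedDeriv_one] at h1
    have := (h1 x).hasDerivAt
    rwa [iteratedDeriv_succ, iteratedDeriv_one]
  have hi : ∫ t in a..b, iteratedDeriv 2 f t = deriv f b - deriv f a :=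
    intervalIntegral.integral_eq_sub_of_hasDerivAt (fun x _ => hd x)
      (hg.intervalIntegrable _ _)
  rw [← hi]
  refine (aux_cs _ hg a b hab).trans ?_
  have h0 : 0 ≤ ∫ t in a..b, iteratedDeriv 2 f t ^ 2 :=
    intervalIntegral.integral_nonneg hab (fun t _ => sq_nonneg _)
  exact mul_le_mul (by linarith) (aux_mono _ hg hab hca hbd) h0 (by linarith)

theorem aux_mvt (f : ℝ → ℝ) (hf : ContDiff ℝ 2 f) {a b : ℝ} (hab : a < b) :
    ∃ c ∈ Set.Ioo a b, f b - f a = (b - a) * deriv f c := by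
  have hd : Differentiable ℝ f := hf.differentiable (by norm_num)
  obtain ⟨c, hc, h⟩ := exists_deriv_eq_slope f hab hd.continuous.continuousOn hd.differentiableOn
  refine ⟨c, hc, ?_⟩
  have : b - a ≠ 0 := (sub_pos.2 hab).ne'
  rw [h]; field_simp

theorem aux_delta (f : ℝ → ℝ) (hf : ContDiff ℝ 2 f) {h : ℝ} (hh : 0 < h) (t : ℝ) :
    (delta2 f h t) ^ 2 ≤ 2 * h ^ 3 * ∫ s in t..(t + 2 * h), iteratedDeriv 2 f s ^ 2 := by
  obtain ⟨c, hc, h1⟩ := aux_mvt f hf (show t < t + h by linarith)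
  obtain ⟨d, hd, h2⟩ := aux_mvt f hf (show t + h < t + 2 * h by linarith)
  have e : delta2 f h t = h * (deriv f d - deriv f c) := by
    unfold delta2; linear_combination h2 - h1
  have := aux_deriv f hf (show c ≤ d by linarith [hc.2, hd.1]) hc.1.le hd.2.le
  rw [e, mul_pow]
  have h3 := mul_le_mul_of_nonneg_left this (sq_nonneg h)
  refine h3.trans (le_of_eq ?_)
  ring

theorem aux_pt (f : ℝ → ℝ) (hf : Continuous f) {a b : ℝ} (hab : a ≤ b) :
    ∃ c ∈ Set.Icc a b, (b - a) * f c ^ 2 ≤ ∫ t in a..b, f t ^ 2 := by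
  obtain ⟨c, hc, hm⟩ := isCompact_Icc.exists_isMinOn (Set.nonempty_Icc.2 hab)
    (show ContinuousOn (fun t => f t ^ 2) (Set.Icc a b) from (hf.pow 2).continuousOn)
  refine ⟨c, hc, ?_⟩
  have : ∫ _t in a..b, f c ^ 2 ≤ ∫ t in a..b, f t ^ 2 :=
    intervalIntegral.integral_mono_on hab (by simp)
      ((hf.pow 2).intervalIntegrable _ _) (fun t ht => hm ht)
  simpa using this

theorem aux_bdry (f : ℝ → ℝ) (hf : ContDiff ℝ 2 f) :
    |f 0| ≤ 14 * (Real.sqrt (∫ t in (0:ℝ)..1, f t ^ 2)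
              + Real.sqrt (∫ t in (0:ℝ)..1, (iteratedDeriv 2 f t)^2)) ∧
    |f 1| ≤ 14 * (Real.sqrt (∫ t in (0:ℝ)..1, f t ^ 2)
              + Real.sqrt (∫ t in (0:ℝ)..1, (iteratedDeriv 2 f t)^2)) := by
  have hc0 : Continuous f := hf.continuous
  set A := Real.sqrt (∫ t in (0:ℝ)..1, f t ^ 2) with hA
  set B := Real.sqrt (∫ t in (0:ℝ)..1, (iteratedDeriv 2 f t)^2) with hB
  have hA0 : 0 ≤ A := Real.sqrt_nonneg _
  have hB0 : 0 ≤ B := Real.sqrt_nonneg _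
  have hA2 : A ^ 2 = ∫ t in (0:ℝ)..1, f t ^ 2 :=
    Real.sq_sqrt (intervalIntegral.integral_nonneg zero_le_one (fun t _ => sq_nonneg _))
  have hD : ∀ x y : ℝ, 0 ≤ x → x ≤ 1 → 0 ≤ y → y ≤ 1 → |deriv f x - deriv f y| ≤ B := by
    intro x y hx0 hx1 hy0 hy1
    apply Real.abs_le_sqrt
    rcases le_total x y with h | h
    · have := aux_deriv f hf h hx0 hy1
      nlinarith
    · have := aux_deriv f hf h hy0 hx1
      nlinarith
  obtain ⟨c, hc, h1⟩ := aux_pt f hc0 (show (0:ℝ) ≤ 1/3 by norm_num)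
  obtain ⟨d, hd, h2⟩ := aux_pt f hc0 (show (2/3:ℝ) ≤ 1 by norm_num)
  have h1' := h1.trans (aux_mono f hc0 (by norm_num) le_rfl (show (1/3:ℝ) ≤ 1 by norm_num))
  have h2' := h2.trans (aux_mono f hc0 (by norm_num) (show (0:ℝ) ≤ 2/3 by norm_num) le_rfl)
  rw [← hA2] at h1' h2'
  have hfc : |f c| ≤ 2 * A := abs_le_of_sq_le_sq (by nlinarith) (by linarith)
  have hfd : |f d| ≤ 2 * A := abs_le_of_sq_le_sq (by nlinarith) (by linarith)
  obtain ⟨hc1, hc2⟩ := hc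
  obtain ⟨hd1, hd2⟩ := hd
  obtain ⟨x, hx, h3⟩ := aux_mvt f hf (show c < d by linarith)
  have hfx : |deriv f x| ≤ 12 * A := by
    have e : |f d - f c| = (d - c) * |deriv f x| := by
      rw [h3, abs_mul, abs_of_pos (by linarith)]
    have := abs_sub (f d) (f c)
    have h5 : 1/3 * |deriv f x| ≤ (d - c) * |deriv f x| :=
      mul_le_mul_of_nonneg_right (by linarith) (abs_nonneg _)
    linarith
  have hall : ∀ y : ℝ, 0 ≤ y → y ≤ 1 → |deriv f y| ≤ 12 * A + B := by
    intro y h0 h1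
    have := hD y x h0 h1 (by linarith [hx.1]) (by linarith [hx.2])
    have h5 := abs_sub_abs_le_abs_sub (deriv f y) (deriv f x)
    linarith
  have hstep : ∀ a b : ℝ, 0 ≤ a → a ≤ b → b ≤ 1 → |f b - f a| ≤ 12 * A + B := by
    intro a b ha hab hb
    rcases hab.eq_or_lt with rfl | h
    · simp; linarith
    obtain ⟨y, hy, e⟩ := aux_mvt f hf h
    rw [e, abs_mul, abs_of_pos (by linarith)]
    have h6 := hall y (by linarith [hy.1]) (by linarith [hy.2])
    have h7 := mul_le_mul_of_nonneg_right (show b - a ≤ 1 by linarith) (abs_nonneg (deriv f y))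
    linarith
  constructor
  · have h5 := hstep 0 c le_rfl hc1 (by linarith)
    rw [abs_sub_comm] at h5
    have := abs_sub_abs_le_abs_sub (f 0) (f c)
    linarith
  · have h5 := hstep d 1 (by linarith) hd2 le_rfl
    have := abs_sub_abs_le_abs_sub (f 1) (f d)
    linarith

theorem aux_level (f : ℝ → ℝ) (hf : ContDiff ℝ 2 f) (j : ℕ) :
    (2:ℝ) ^ (3 * (j:ℝ) / 2) *
            Real.sqrt (∑ k ∈ Finset.range (2^j),
              ((1/2) * delta2 f ((2:ℝ)^(-(j:ℤ)-1)) ((2:ℝ)^(-(j:ℤ)) * (k:ℝ)))^2)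
          ≤ Real.sqrt (∫ t in (0:ℝ)..1, (iteratedDeriv 2 f t)^2) := by
  have hg : Continuous (iteratedDeriv 2 f) := hf.continuous_iteratedDeriv 2 le_rfl
  have hN : (0:ℝ) < 2 ^ j := by positivity
  have e1 : (2:ℝ) ^ (3 * (j:ℝ) / 2) = Real.sqrt (((2:ℝ) ^ j) ^ 3) := by
    rw [Real.sqrt_eq_rpow, ← pow_mul, ← Real.rpow_natCast, ← Real.rpow_mul (by norm_num)]
    congr 1
    push_cast
    ring
  have e2 : (2:ℝ)^(-(j:ℤ)) = ((2:ℝ) ^ j)⁻¹ := by simp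
  have e3 : (2:ℝ)^(-(j:ℤ)-1) = ((2:ℝ) ^ j)⁻¹ / 2 := by
    rw [zpow_sub_one₀ (by norm_num), e2]; ring
  rw [e1, e2, e3, ← Real.sqrt_mul (by positivity)]
  apply Real.sqrt_le_sqrt
  set n : ℝ := ((2:ℝ) ^ j)⁻¹ with hn
  have hn0 : 0 < n := inv_pos.2 hN
  have hsum : ∑ k ∈ Finset.range (2^j), ∫ t in (n * (k:ℝ))..(n * ((k+1 : ℕ):ℝ)),
      iteratedDeriv 2 f t ^ 2 = ∫ t in (0:ℝ)..1, iteratedDeriv 2 f t ^ 2 := by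
    rw [intervalIntegral.sum_integral_adjacent_intervals (a := fun k : ℕ => n * (k:ℝ))
      (fun k _ => Continuous.intervalIntegrable (by fun_prop) _ _)]
    simp [hn]
  have hle : ∑ k ∈ Finset.range (2^j), ((1/2) * delta2 f (n / 2) (n * (k:ℝ)))^2
      ≤ n ^ 3 / 16 * ∫ t in (0:ℝ)..1, iteratedDeriv 2 f t ^ 2 := by
    rw [← hsum, Finset.mul_sum]
    refine Finset.sum_le_sum fun k _ => ?_
    have := aux_delta f hf (half_pos hn0) (n * (k:ℝ))
    have e : n * (k:ℝ) + 2 * (n / 2) = n * ((k + 1 : ℕ) : ℝ) := by push_cast; ring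
    rw [e] at this
    rw [mul_pow]
    linarith
  have hI : 0 ≤ ∫ t in (0:ℝ)..1, iteratedDeriv 2 f t ^ 2 :=
    intervalIntegral.integral_nonneg zero_le_one (fun t _ => sq_nonneg _)
  refine (mul_le_mul_of_nonneg_left hle (by positivity)).trans ?_
  have : ((2:ℝ) ^ j) ^ 3 * n ^ 3 = 1 := by
    rw [← mul_pow, hn, mul_inv_cancel₀ hN.ne', one_pow]
  calc _ = (((2:ℝ) ^ j) ^ 3 * n ^ 3) / 16 * ∫ t in (0:ℝ)..1, iteratedDeriv 2 f t ^ 2 := by ring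
    _ ≤ _ := by rw [this]; linarith

/-- dyadic norm bound on `[0,1]`: there is `C > 0` such that for every
`f ∈ C²`, both the boundary term `(f(0)² + f(1)²)^{1/2}` and every level term
`2^{3j/2} (Σ_{k<2^j} |(1/2)Δ²_{2^{−j−1}} f(2^{−j}k)|²)^{1/2}` are bounded by
`C(‖f‖_{L²([0,1])} + ‖f''‖_{L²([0,1])})`; i.e. the maximum of the two is. -/
theorem dyadic_norm_le_sobolev_unit_interval :
    ∃ C : ℝ, 0 < C ∧ ∀ f : ℝ → ℝ, ContDiff ℝ 2 f →
      (Real.sqrt (f 0 ^ 2 + f 1 ^ 2)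
          ≤ C * (Real.sqrt (∫ t in (0:ℝ)..1, f t ^ 2)
              + Real.sqrt (∫ t in (0:ℝ)..1, (iteratedDeriv 2 f t)^2))) ∧
      (∀ j : ℕ,
        (2:ℝ) ^ (3 * (j:ℝ) / 2) *
            Real.sqrt (∑ k ∈ Finset.range (2^j),
              ((1/2) * delta2 f ((2:ℝ)^(-(j:ℤ)-1)) ((2:ℝ)^(-(j:ℤ)) * (k:ℝ)))^2)
          ≤ C * (Real.sqrt (∫ t in (0:ℝ)..1, f t ^ 2)
              + Real.sqrt (∫ t in (0:ℝ)..1, (iteratedDeriv 2 f t)^2))) := by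
  refine ⟨28, by norm_num, fun f hf => ⟨?_, fun j => ?_⟩⟩
  · obtain ⟨h0, h1⟩ := aux_bdry f hf
    have : Real.sqrt (f 0 ^ 2 + f 1 ^ 2) ≤ |f 0| + |f 1| := by
      apply Real.sqrt_le_iff.2
      refine ⟨by positivity, ?_⟩
      nlinarith [sq_abs (f 0), sq_abs (f 1), mul_nonneg (abs_nonneg (f 0)) (abs_nonneg (f 1))]
    linarith
  · have h := aux_level f hf j
    have hA := Real.sqrt_nonneg (∫ t in (0:ℝ)..1, f t ^ 2)
    have hB := Real.sqrt_nonneg (∫ t in (0:ℝ)..1, (iteratedDeriv 2 f t)^2)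
    linarith
end

section
/- For every j ∈ ℕ₀, every k ∈ {0, 1, …, 2^j − 1} and every x ∈ [0,1] one has v_{j,k}(|2x − 1|) = v_{j+1, 2^j + k}(x) + v_{j+1, 2^j − k − 1}(x). Moreover, for every x ∈ [0,1], v_{−1,0}(|2x − 1|) = v_{0,0}(x) and v_{−1,1}(|2x − 1|) = 1 − v_{0,0}(x). -/
open scoped BigOperators ENNReal

lemma hatFn_eq (j k : ℤ) (x : ℝ) :
    hatFn j k x = max (1 - |2 * ((2:ℝ)^j * x - k) - 1|) 0 := by
  have hp : (0:ℝ) < (2:ℝ)^j := by positivity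
  have e1 : (2:ℝ)^(j+1) = 2 * (2:ℝ)^j := by
    rw [zpow_add₀ (by norm_num), zpow_one, mul_comm]
  have e2 : ∀ a : ℝ, (2:ℝ)^(-j) * a ≤ x ↔ a ≤ (2:ℝ)^j * x := by
    intro a
    rw [zpow_neg, inv_mul_le_iff₀ hp]
  have e3 : ∀ a : ℝ, x ≤ (2:ℝ)^(-j) * a ↔ (2:ℝ)^j * x ≤ a := by
    intro a
    rw [zpow_neg, le_inv_mul_iff₀ hp]
  have e4 : ∀ a : ℝ, (2:ℝ)^j * ((2:ℝ)^(-j) * a) = a := by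
    intro a
    rw [zpow_neg, mul_inv_cancel_left₀ hp.ne']
  unfold hatFn
  simp only [e1, e2, e3, mul_assoc, mul_sub, e4]
  generalize (2:ℝ)^j * x = y
  split_ifs with h1 h2
  · rw [abs_of_nonpos (by linarith), max_eq_left (by linarith)]
    ring
  · rw [abs_of_nonneg (by linarith), max_eq_left (by linarith)]
    ring
  · symm
    apply max_eq_right
    by_contra h
    push Not at h
    have h' : |2 * y - 2 * (k:ℝ) - 1| < 1 := by linarith
    rw [abs_lt] at h'
    rcases le_total y (k + 1/2) with hy | hy
    · exact h1 ⟨by linarith, hy⟩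
    · exact h2 ⟨hy, by linarith⟩

lemma tent_aux (u k : ℝ) (hk : 0 ≤ k) :
    max (1 - |2 * (|u| - k) - 1|) 0
      = max (1 - |2 * (u - k) - 1|) 0 + max (1 - |2 * (u + k + 1) - 1|) 0 := by
  rcases le_total 0 u with hu | hu
  · rw [abs_of_nonneg hu, abs_of_nonneg (by linarith : 0 ≤ 2 * (u + k + 1) - 1),
      max_eq_right (by linarith : 1 - (2 * (u + k + 1) - 1) ≤ 0), add_zero]
  · rw [abs_of_nonpos hu, abs_of_nonpos (by linarith : 2 * (u - k) - 1 ≤ 0),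
      max_eq_right (by linarith : 1 - -(2 * (u - k) - 1) ≤ 0), zero_add,
      ← abs_neg]
    congr 3
    ring

/-- tent transform of Faber basis functions: for `j ∈ ℕ₀`,
`0 ≤ k < 2^j` and `x ∈ [0,1]`, `v_{j,k}(|2x−1|) = v_{j+1,2^j+k}(x) + v_{j+1,2^j−k−1}(x)`;
moreover `v_{−1,0}(|2x−1|) = v_{0,0}(x)` and `v_{−1,1}(|2x−1|) = 1 − v_{0,0}(x)`. -/
theorem tent_transform_faber_basis :
    (∀ (j k : ℕ), k < 2^j → ∀ x ∈ Set.Icc (0:ℝ) 1,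
      faberV (j:ℤ) (k:ℤ) (|2*x - 1|)
        = faberV ((j:ℤ)+1) ((2:ℤ)^j + (k:ℤ)) x + faberV ((j:ℤ)+1) ((2:ℤ)^j - (k:ℤ) - 1) x) ∧
    (∀ x ∈ Set.Icc (0:ℝ) 1, faberV (-1) 0 (|2*x - 1|) = faberV 0 0 x) ∧
    (∀ x ∈ Set.Icc (0:ℝ) 1, faberV (-1) 1 (|2*x - 1|) = 1 - faberV 0 0 x) := by
  refine ⟨?_, ?_, ?_⟩
  · intro j k _ x _
    have h1 : (j:ℤ) ≠ -1 := by omega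
    have h2 : (j:ℤ) + 1 ≠ -1 := by omega
    simp only [faberV, if_neg h1, if_neg h2, hatFn_eq]
    have hp : (0:ℝ) < (2:ℝ)^j := by positivity
    have e1 : (2:ℝ)^((j:ℤ)+1) = 2 * (2:ℝ)^j := by
      rw [zpow_add₀ (by norm_num), zpow_one, mul_comm, zpow_natCast]
    have e2 : (2:ℝ)^j * |2 * x - 1| = |(2:ℝ)^j * (2 * x - 1)| := by
      rw [abs_mul, abs_of_pos hp]
    rw [e1, zpow_natCast, e2]
    push_cast
    rw [tent_aux _ _ (Nat.cast_nonneg k)]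
    congr 4 <;> ring
  · intro x hx
    have h : |2 * x - 1| ≤ 1 := abs_le.2 ⟨by linarith [hx.1], by linarith [hx.2]⟩
    simp [faberV, hatFn_eq]
  · intro x hx
    have h : |2 * x - 1| ≤ 1 := abs_le.2 ⟨by linarith [hx.1], by linarith [hx.2]⟩
    have h0 := abs_nonneg (2 * x - 1)
    simp only [faberV, hatFn_eq]
    norm_num
    rw [abs_of_nonpos (by linarith : |2 * x - 1| - 1 ≤ 0), max_eq_left (by linarith),
      max_eq_left (by linarith)]
    ring
end

section
/- Let f : [0,1] → ℝ be continuous and define g : [0,1] → ℝ by g(x) = f(|2x − 1|). Then: (i) g(0) = f(1); (ii) −(1/2)(g(1) − 2g(1/2) + g(0)) = f(0) − f(1); and (iii) for every j ≥ 1 and every k with 0 ≤ k < 2^j, Δ²_{2^{−j−1}} g(2^{−j}k) = Δ²_{2^{−j}} f(2^{−j+1}(2^{j−1} − k − 1)) if 0 ≤ k < 2^{j−1}, and Δ²_{2^{−j−1}} g(2^{−j}k) = Δ²_{2^{−j}} f(2^{−j+1}(k − 2^{j−1})) if 2^{j−1} ≤ k < 2^j. -/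
open scoped BigOperators ENNReal

/-- Faber coefficients under the tent transform: with
`g(x) = f(|2x−1|)` one has (i) `g(0) = f(1)`, (ii) `−(1/2)(g(1) − 2g(1/2) + g(0)) = f(0) − f(1)`,
and (iii) for `j ≥ 1` and `0 ≤ k < 2^j` the second differences of `g` at level `j` are second
differences of `f` at level `j−1` as described. -/
theorem tent_transform_faber_coefficients (f : ℝ → ℝ) (hf : ContinuousOn f (Set.Icc 0 1)) :
    ((fun x : ℝ => f (|2*x - 1|)) 0 = f 1) ∧
    (-(1/2) * ((fun x : ℝ => f (|2*x - 1|)) 1 - 2 * (fun x : ℝ => f (|2*x - 1|)) (1/2)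
        + (fun x : ℝ => f (|2*x - 1|)) 0) = f 0 - f 1) ∧
    (∀ j : ℕ, 1 ≤ j → ∀ k : ℕ, k < 2^j →
      ((k < 2^(j-1) →
        delta2 (fun x => f (|2*x - 1|)) ((2:ℝ)^(-(j:ℤ)-1)) ((2:ℝ)^(-(j:ℤ)) * (k:ℝ))
          = delta2 f ((2:ℝ)^(-(j:ℤ)))
              ((2:ℝ)^(-(j:ℤ)+1) * (((2^(j-1) : ℕ) : ℝ) - (k:ℝ) - 1))) ∧
       (2^(j-1) ≤ k →
        delta2 (fun x => f (|2*x - 1|)) ((2:ℝ)^(-(j:ℤ)-1)) ((2:ℝ)^(-(j:ℤ)) * (k:ℝ))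
          = delta2 f ((2:ℝ)^(-(j:ℤ)))
              ((2:ℝ)^(-(j:ℤ)+1) * ((k:ℝ) - ((2^(j-1) : ℕ) : ℝ)))))) := by
  refine ⟨by norm_num, by norm_num; ring, ?_⟩
  intro j hj k hk
  have h1 : (2:ℝ)^(-(j:ℤ)-1) = (2:ℝ)^(-(j:ℤ)) / 2 := by
    rw [zpow_sub₀ (by norm_num)]; norm_num
  have h2 : (2:ℝ)^(-(j:ℤ)+1) = 2 * (2:ℝ)^(-(j:ℤ)) := by
    rw [zpow_add₀ (by norm_num)]; norm_num; ring
  have h3 : 2 * (2:ℝ)^(-(j:ℤ)) * ((2^(j-1) : ℕ) : ℝ) = 1 := by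
    obtain ⟨m, rfl⟩ : ∃ m, j = m + 1 := ⟨j - 1, by omega⟩
    rw [zpow_neg, zpow_natCast, Nat.add_sub_cancel, pow_succ]
    push_cast
    field_simp
  have ha : 0 < (2:ℝ)^(-(j:ℤ)) := by positivity
  rw [h1, h2]
  generalize (2:ℝ)^(-(j:ℤ)) = a at *
  generalize 2^(j-1) = P at *
  unfold delta2
  constructor
  · intro h
    have h' : (k:ℝ) + 1 ≤ P := by exact_mod_cast h
    have hm : a * ((k:ℝ) + 1) ≤ a * P := mul_le_mul_of_nonneg_left h' ha.le
    have e1 : |2 * (a * k + 2 * (a / 2)) - 1| = 2 * a * (P - k - 1) := by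
      rw [abs_of_nonpos (by linarith)]; linarith
    have e2 : |2 * (a * k + a / 2) - 1| = 2 * a * (P - k - 1) + a := by
      rw [abs_of_nonpos (by linarith)]; linarith
    have e3 : |2 * (a * k) - 1| = 2 * a * (P - k - 1) + 2 * a := by
      rw [abs_of_nonpos (by linarith)]; linarith
    simp only [e1, e2, e3]
    ring
  · intro h
    have h' : (P:ℝ) ≤ k := by exact_mod_cast h
    have hm : a * (P:ℝ) ≤ a * k := mul_le_mul_of_nonneg_left h' ha.le
    have e1 : |2 * (a * k + 2 * (a / 2)) - 1| = 2 * a * (k - P) + 2 * a := by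
      rw [abs_of_nonneg (by linarith)]; linarith
    have e2 : |2 * (a * k + a / 2) - 1| = 2 * a * (k - P) + a := by
      rw [abs_of_nonneg (by linarith)]; linarith
    have e3 : |2 * (a * k) - 1| = 2 * a * (k - P) := by
      rw [abs_of_nonneg (by linarith)]; linarith
    simp only [e1, e2, e3]
end

section
/- Let f : ℝ → ℝ be twice continuously differentiable and let k be a nonzero integer. Then | ∫_0^1 f(|2x − 1|) e^{−2πi k x} dx | ≤ (1/(πk)²) · ( |f'(1)| + |f'(0)| + (1/√2) (∫_0^1 f''(t)² dt)^{1/2} ). -/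
open scoped BigOperators

lemma tent_aux_ibp (f : ℝ → ℝ) (hf : ContDiff ℝ 2 f) (a : ℝ) (hs : Real.sin a = 0) :
    a^2 * (∫ t in (0:ℝ)..1, f t * Real.cos (a*t)) =
      deriv f 1 * Real.cos a - deriv f 0
        - ∫ t in (0:ℝ)..1, iteratedDeriv 2 f t * Real.cos (a*t) := by
  have hc0 : Continuous f := hf.continuous
  have hc2 : Continuous (iteratedDeriv 2 f) := hf.continuous_iteratedDeriv 2 le_rfl
  have hd : ∀ t, HasDerivAt f (deriv f t) t := fun t =>
    (hf.differentiable (by norm_num) t).hasDerivAt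
  have hd1 : Differentiable ℝ (deriv f) := by
    have := hf.differentiable_iteratedDeriv 1 (by norm_num)
    rwa [iteratedDeriv_one] at this
  have hd2 : ∀ t, HasDerivAt (deriv f) (iteratedDeriv 2 f t) t := fun t => by
    have := (hd1 t).hasDerivAt
    rwa [show iteratedDeriv 2 f t = deriv (deriv f) t by
      rw [iteratedDeriv_succ, iteratedDeriv_one]]
  have hat : ∀ t : ℝ, HasDerivAt (fun t : ℝ => a * t) a t := fun t => by
    simpa using (hasDerivAt_id t).const_mul a
  have key : ∫ t in (0:ℝ)..1, (a^2 * (f t * Real.cos (a*t)) + iteratedDeriv 2 f t * Real.cos (a*t))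
      = (a * (f 1 * Real.sin (a*1)) + deriv f 1 * Real.cos (a*1))
        - (a * (f 0 * Real.sin (a*0)) + deriv f 0 * Real.cos (a*0)) := by
    apply intervalIntegral.integral_eq_sub_of_hasDerivAt
      (f := fun t => a * (f t * Real.sin (a*t)) + deriv f t * Real.cos (a*t))
    · intro t _
      have h := (((hd t).mul (hat t).sin).const_mul a).add ((hd2 t).mul (hat t).cos)
      refine h.congr_deriv ?_
      ring
    · apply Continuous.intervalIntegrable
      fun_prop
  rw [intervalIntegral.integral_add, intervalIntegral.integral_const_mul] at key
  · simp [hs] at key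
    linarith
  · apply Continuous.intervalIntegrable
    fun_prop
  · apply Continuous.intervalIntegrable
    fun_prop

lemma tent_aux_cos (a : ℝ) (ha : a ≠ 0) (hs : Real.sin a = 0) :
    ∫ t in (0:ℝ)..1, Real.cos (a*t)^2 = 1/2 := by
  have hat : ∀ t : ℝ, HasDerivAt (fun t : ℝ => a * t) a t := fun t => by
    simpa using (hasDerivAt_id t).const_mul a
  rw [intervalIntegral.integral_eq_sub_of_hasDerivAt
      (f := fun t => (t + Real.sin (a*t) * Real.cos (a*t) / a)/2)]
  · simp [hs]
  · intro t _
    have h := ((hasDerivAt_id t).add (((hat t).sin.mul (hat t).cos).div_const a)).div_const 2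
    refine h.congr_deriv ?_
    field_simp
    have := Real.sin_sq_add_cos_sq (a*t)
    linarith
  · apply Continuous.intervalIntegrable
    fun_prop

lemma tent_aux_cs (g : ℝ → ℝ) (hg : Continuous g) (a : ℝ) (ha : a ≠ 0) (hs : Real.sin a = 0) :
    |∫ t in (0:ℝ)..1, g t * Real.cos (a*t)| ≤
      (1 / Real.sqrt 2) * Real.sqrt (∫ t in (0:ℝ)..1, (g t)^2) := by
  obtain ⟨p, hp⟩ : ∃ p, p = ∫ t in (0:ℝ)..1, g t * Real.cos (a*t) := ⟨_, rfl⟩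
  have h0 : 0 ≤ ∫ t in (0:ℝ)..1, (g t - 2 * p * Real.cos (a*t))^2 :=
    intervalIntegral.integral_nonneg (by norm_num) (fun t _ => sq_nonneg _)
  have h1 : ∫ t in (0:ℝ)..1, (g t - 2 * p * Real.cos (a*t))^2 =
      (∫ t in (0:ℝ)..1, (g t)^2) - 4 * p * (∫ t in (0:ℝ)..1, g t * Real.cos (a*t)) + 4 * p^2 * (1/2) := by
    rw [← tent_aux_cos a ha hs]
    rw [← intervalIntegral.integral_const_mul, ← intervalIntegral.integral_const_mul,
      ← intervalIntegral.integral_sub, ← intervalIntegral.integral_add]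
    · congr 1
      ext t
      ring
    all_goals
      apply Continuous.intervalIntegrable
      fun_prop
  rw [← hp] at h1 ⊢
  rw [one_div, ← Real.sqrt_inv, ← Real.sqrt_mul (by norm_num)]
  apply Real.abs_le_sqrt
  nlinarith

lemma tent_aux_subst (f : ℝ → ℝ) (hf : Continuous f) (k : ℤ) :
    ∫ x in (0:ℝ)..1, (f (|2*x - 1|) : ℂ) *
        Complex.exp (-2 * (Real.pi : ℂ) * Complex.I * (k : ℂ) * (x : ℂ)) =
      Complex.exp (((-(Real.pi * k) : ℝ) : ℂ) * Complex.I) *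
        ((∫ t in (0:ℝ)..1, f t * Real.cos (Real.pi * k * t) : ℝ) : ℂ) := by
  let h : ℝ → ℂ := fun t => (f |t| : ℂ) *
    Complex.exp (-(Real.pi : ℂ) * Complex.I * (k : ℂ) * ((t : ℂ) + 1))
  have hh : Continuous h := by
    simp only [h]
    fun_prop
  have e1 : ∫ x in (0:ℝ)..1, (f (|2*x - 1|) : ℂ) *
        Complex.exp (-2 * (Real.pi : ℂ) * Complex.I * (k : ℂ) * (x : ℂ)) =
      ∫ x in (0:ℝ)..1, h (2 * x - 1) := by
    congr 1
    ext x
    simp only [h]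
    congr 2
    push_cast
    ring
  have e2 : ∫ t in (-1:ℝ)..0, h t = ∫ t in (0:ℝ)..1, h (-t) := by
    rw [intervalIntegral.integral_comp_neg]
    simp
  have e3 : ∫ t in (-1:ℝ)..1, h t = ∫ t in (0:ℝ)..1, (h (-t) + h t) := by
    rw [intervalIntegral.integral_add, ← e2,
      intervalIntegral.integral_add_adjacent_intervals]
    all_goals
      apply Continuous.intervalIntegrable
      fun_prop
  rw [e1, intervalIntegral.integral_comp_mul_sub (fun x => h x) (by norm_num : (2:ℝ) ≠ 0) 1]
  norm_num
  rw [e3, ← intervalIntegral.integral_ofReal, ← intervalIntegral.integral_const_mul,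
    ← intervalIntegral.integral_const_mul]
  apply intervalIntegral.integral_congr
  intro t ht
  rw [Set.uIcc_of_le (by norm_num)] at ht
  simp only [h, abs_neg, abs_of_nonneg ht.1]
  push_cast
  rw [Complex.cos,
    show -(Real.pi : ℂ) * Complex.I * (k : ℂ) * (-(t : ℂ) + 1) =
      -(Real.pi * k * Complex.I) + Real.pi * k * t * Complex.I by ring,
    show -(Real.pi : ℂ) * Complex.I * (k : ℂ) * ((t : ℂ) + 1) =
      -(Real.pi * k * Complex.I) + -(Real.pi * k * t) * Complex.I by ring,
    Complex.exp_add, Complex.exp_add]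
  ring_nf

/-- for `f ∈ C²(ℝ)` and `k ∈ ℤ \ {0}`, the `k`-th Fourier coefficient of
the tent transformed function satisfies
`|∫₀¹ f(|2x−1|)e^{−2πikx} dx| ≤ (1/(πk)²)(|f'(1)| + |f'(0)| + (1/√2)‖f''‖_{L²([0,1])})`. -/
theorem tent_fourier_coefficient_decay (f : ℝ → ℝ) (hf : ContDiff ℝ 2 f)
    (k : ℤ) (hk : k ≠ 0) :
    ‖∫ x in (0:ℝ)..1, (f (|2*x - 1|) : ℂ) *
        Complex.exp (-2 * (Real.pi : ℂ) * Complex.I * (k : ℂ) * (x : ℂ))‖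
      ≤ (1 / (Real.pi * (k:ℝ))^2) *
        (|deriv f 1| + |deriv f 0| +
          (1 / Real.sqrt 2) * Real.sqrt (∫ t in (0:ℝ)..1, (iteratedDeriv 2 f t)^2)) := by
  have hs : Real.sin (Real.pi * k) = 0 := by
    rw [mul_comm]; exact Real.sin_int_mul_pi k
  have ha : Real.pi * (k:ℝ) ≠ 0 := mul_ne_zero Real.pi_ne_zero (by exact_mod_cast hk)
  rw [tent_aux_subst f hf.continuous k, norm_mul, Complex.norm_exp_ofReal_mul_I, one_mul,
    Complex.norm_real, Real.norm_eq_abs]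
  have h1 := tent_aux_ibp f hf _ hs
  have h2 := tent_aux_cs (iteratedDeriv 2 f) (hf.continuous_iteratedDeriv 2 le_rfl) _ ha hs
  have hpos : 0 < (Real.pi * (k:ℝ))^2 := by positivity
  rw [one_div_mul_eq_div, le_div_iff₀ hpos, mul_comm, ← abs_of_pos hpos, ← abs_mul, h1]
  have h3 : |deriv f 1 * Real.cos (Real.pi * k)| ≤ |deriv f 1| := by
    rw [abs_mul]
    exact mul_le_of_le_one_right (abs_nonneg _) (Real.abs_cos_le_one _)
  refine (abs_sub _ _).trans (add_le_add ((abs_sub _ _).trans (add_le_add h3 le_rfl)) h2)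
end

section
/- Let f : ℝ → ℝ be twice continuously differentiable, let m ∈ ℤ and let k be a nonzero integer. Then ∫_0^1 f(|2x − 1| − m) e^{−2πi k x} dx = (1/(πk)²) · ( f'(1 − m) − (−1)^k f'(−m) − (−1)^{k(m+1)} ∫_{−m}^{1−m} f''(u) cos(πku) du ). -/
open scoped BigOperators

lemma tent_aux_cos_pi (k : ℤ) : Real.cos (Real.pi * k) = (-1 : ℝ)^k := by
  rw [mul_comm, Real.cos_int_mul_pi]

lemma tent_aux_sin_pi (k : ℤ) : Real.sin (Real.pi * k) = 0 := by
  rw [mul_comm, Real.sin_int_mul_pi]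

lemma tent_aux_real (f : ℝ → ℝ) (hf : ContDiff ℝ 2 f) (m k : ℤ) (hk : k ≠ 0) :
    ∫ u in (-(m:ℝ))..(1 - (m:ℝ)), f u * Real.cos (Real.pi * k * (u + m))
      = (1 / (Real.pi * k)^2) * ((-1 : ℝ)^k * deriv f (1 - m) - deriv f (-m)
        - (-1 : ℝ)^(k*m) * ∫ u in (-(m:ℝ))..(1 - (m:ℝ)),
            iteratedDeriv 2 f u * Real.cos (Real.pi * k * u)) := by
  have ha : Real.pi * (k:ℝ) ≠ 0 := mul_ne_zero Real.pi_ne_zero (by exact_mod_cast hk)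
  have hc : ∀ u : ℝ, Real.cos (Real.pi * k * (u + m))
      = (-1 : ℝ)^(k*m) * Real.cos (Real.pi * k * u) := by
    intro u
    have h1 := tent_aux_cos_pi (k*m)
    have h2 := tent_aux_sin_pi (k*m)
    push_cast at h1 h2
    rw [← mul_assoc] at h1 h2
    rw [mul_add, Real.cos_add, h1, h2]
    ring
  have hd2 : iteratedDeriv 2 f = deriv (deriv f) := by
    rw [iteratedDeriv_succ, iteratedDeriv_one]
  have hf1 : ContDiff ℝ 1 (deriv f) := by
    have : ContDiff ℝ (1+1) f := by simpa [one_add_one_eq_two] using hf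
    exact (contDiff_succ_iff_deriv.1 this).2.2
  have hcf : Continuous f := hf.continuous
  have hcd : Continuous (deriv (deriv f)) := hf1.continuous_deriv le_rfl
  have hD0 : ∀ u, HasDerivAt f (deriv f u) u := fun u =>
    (hf.differentiable (by norm_num) u).hasDerivAt
  have hD1 : ∀ u, HasDerivAt (deriv f) (deriv (deriv f) u) u := fun u =>
    (hf1.differentiable (by norm_num) u).hasDerivAt
  rw [hd2]
  set a := Real.pi * (k:ℝ) with hadef
  have hI := intervalIntegral.integral_eq_sub_of_hasDerivAt (a := -(m:ℝ)) (b := 1 - (m:ℝ))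
    (f := fun u => f u * Real.sin (a * (u + m)) / a + deriv f u * Real.cos (a * (u + m)) / a^2)
    (f' := fun u => f u * Real.cos (a * (u + m))
      + (1 / a^2 * (-1 : ℝ)^(k*m)) * (deriv (deriv f) u * Real.cos (a * u)))
    (by
      intro u _
      have hl : HasDerivAt (fun u : ℝ => a * (u + m)) a u := by
        simpa using ((hasDerivAt_id u).add_const (m:ℝ)).const_mul a
      have h := (((hD0 u).mul hl.sin).div_const a).add (((hD1 u).mul hl.cos).div_const (a^2))
      refine h.congr_deriv ?_
      have := hc u
      rw [show (1 / a^2 * (-1 : ℝ)^(k*m)) * (deriv (deriv f) u * Real.cos (a * u))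
        = 1 / a^2 * deriv (deriv f) u * Real.cos (a * (u + m)) by rw [this]; ring]
      field_simp
      ring)
    (Continuous.intervalIntegrable (by fun_prop) _ _)
  rw [intervalIntegral.integral_add (Continuous.intervalIntegrable (by fun_prop) _ _)
    (Continuous.intervalIntegrable (by fun_prop) _ _),
    intervalIntegral.integral_const_mul] at hI
  have hs := tent_aux_sin_pi k
  have hk' := tent_aux_cos_pi k
  rw [← hadef] at hs hk'
  simp only [sub_add_cancel, neg_add_cancel, mul_one, mul_zero, Real.sin_zero, Real.cos_zero,
    hs, hk'] at hI
  rw [eq_sub_of_add_eq hI]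
  ring

lemma tent_aux_complex (f : ℝ → ℝ) (hf : Continuous f) (m k : ℤ) :
    (∫ x in (0:ℝ)..1, (f (|2*x - 1| - (m:ℝ)) : ℂ) *
        Complex.exp (-2 * (Real.pi : ℂ) * Complex.I * (k : ℂ) * (x : ℂ)))
      = (-1 : ℂ)^k * Complex.ofReal
        (∫ u in (-(m:ℝ))..(1 - (m:ℝ)), f u * Real.cos (Real.pi * k * (u + m))) := by
  let G1 : ℝ → ℂ := fun u => (f u : ℂ) *
    Complex.exp (-(Real.pi : ℂ) * Complex.I * (k : ℂ) * (1 - m - u))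
  let G2 : ℝ → ℂ := fun u => (f u : ℂ) *
    Complex.exp (-(Real.pi : ℂ) * Complex.I * (k : ℂ) * (1 + m + u))
  have hG1 : Continuous G1 := by fun_prop
  have hG2 : Continuous G2 := by fun_prop
  have hint : ∀ a b : ℝ, IntervalIntegrable (fun x : ℝ => (f (|2*x - 1| - (m:ℝ)) : ℂ) *
        Complex.exp (-2 * (Real.pi : ℂ) * Complex.I * (k : ℂ) * (x : ℂ)))
        MeasureTheory.volume a b := fun a b =>
    Continuous.intervalIntegrable (by fun_prop) _ _
  rw [← intervalIntegral.integral_add_adjacent_intervals (hint 0 (1/2)) (hint (1/2) 1)]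
  have e1 : (∫ x in (0:ℝ)..(1/2), (f (|2*x - 1| - (m:ℝ)) : ℂ) *
        Complex.exp (-2 * (Real.pi : ℂ) * Complex.I * (k : ℂ) * (x : ℂ)))
      = ∫ x in (0:ℝ)..(1/2), G1 ((1 - m) - 2 * x) := by
    apply intervalIntegral.integral_congr
    intro x hx
    rw [Set.uIcc_of_le (by norm_num)] at hx
    have : |2*x-1| = 1 - 2*x := by rw [abs_of_nonpos] <;> linarith [hx.2]
    simp only [G1, this]
    congr 2
    · congr 1; ring
    · push_cast; ring
  have e2 : (∫ x in (1/2:ℝ)..1, (f (|2*x - 1| - (m:ℝ)) : ℂ) *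
        Complex.exp (-2 * (Real.pi : ℂ) * Complex.I * (k : ℂ) * (x : ℂ)))
      = ∫ x in (1/2:ℝ)..1, G2 (2 * x - (1 + m)) := by
    apply intervalIntegral.integral_congr
    intro x hx
    rw [Set.uIcc_of_le (by norm_num)] at hx
    have : |2*x-1| = 2*x - 1 := by rw [abs_of_nonneg]; linarith [hx.1]
    simp only [G2, this]
    congr 2
    · congr 1; ring
    · push_cast; ring
  rw [e1, e2, intervalIntegral.integral_comp_sub_mul _ two_ne_zero,
    intervalIntegral.integral_comp_mul_sub _ two_ne_zero]
  rw [show (1 - (m:ℝ)) - 2 * (1/2) = -m by ring, show (1 - (m:ℝ)) - 2 * 0 = 1 - m by ring,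
    show 2 * (1/2) - (1 + (m:ℝ)) = -m by ring, show 2 * 1 - (1 + (m:ℝ)) = 1 - m by ring,
    ← smul_add, ← intervalIntegral.integral_add (hG1.intervalIntegrable _ _)
      (hG2.intervalIntegrable _ _), ← intervalIntegral.integral_smul,
    ← intervalIntegral.integral_ofReal, ← intervalIntegral.integral_const_mul]
  apply intervalIntegral.integral_congr
  intro u _
  have hexp : Complex.exp (-(Real.pi : ℂ) * Complex.I * k) = (-1 : ℂ)^k := by
    rw [mul_comm, Complex.exp_int_mul, neg_mul, Complex.exp_neg, Complex.exp_pi_mul_I]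
    norm_num
  simp only [G1, G2]
  rw [show -(Real.pi : ℂ) * Complex.I * k * (1 - m - u)
      = -(Real.pi : ℂ) * Complex.I * k + (Real.pi * k * (u + m)) * Complex.I by ring,
    show -(Real.pi : ℂ) * Complex.I * k * (1 + m + u)
      = -(Real.pi : ℂ) * Complex.I * k + -(Real.pi * k * (u + m)) * Complex.I by ring,
    Complex.exp_add, Complex.exp_add, hexp]
  push_cast
  rw [Complex.cos, Complex.real_smul]
  push_cast
  ring

/-- for `f ∈ C²(ℝ)`, `m ∈ ℤ` and `k ∈ ℤ \ {0}`,
`∫₀¹ f(|2x−1|−m)e^{−2πikx} dx = (1/(πk)²)(f'(1−m) − (−1)^k f'(−m)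
− (−1)^{k(m+1)} ∫_{−m}^{1−m} f''(u)cos(πku) du)`. -/
theorem tent_fourier_coefficient_shifted (f : ℝ → ℝ) (hf : ContDiff ℝ 2 f)
    (m : ℤ) (k : ℤ) (hk : k ≠ 0) :
    (∫ x in (0:ℝ)..1, (f (|2*x - 1| - (m:ℝ)) : ℂ) *
        Complex.exp (-2 * (Real.pi : ℂ) * Complex.I * (k : ℂ) * (x : ℂ)))
      = (1 / ((Real.pi : ℂ) * (k : ℂ))^2) *
          (Complex.ofReal (deriv f (1 - (m:ℝ)))
            - (-1 : ℂ)^k * Complex.ofReal (deriv f (-(m:ℝ)))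
            - (-1 : ℂ)^(k*(m+1)) *
                Complex.ofReal (∫ u in (-(m:ℝ))..(1 - (m:ℝ)),
                    iteratedDeriv 2 f u * Real.cos (Real.pi * (k:ℝ) * u))) := by
  rw [tent_aux_complex f hf.continuous m k, tent_aux_real f hf m k hk]
  have h1 : (-1 : ℂ)^k * (-1 : ℂ)^k = 1 := by
    rw [← mul_zpow]; norm_num
  have h2 : (-1 : ℂ)^(k*(m+1)) = (-1 : ℂ)^k * (-1 : ℂ)^(k*m) := by
    rw [← zpow_add₀ (by norm_num)]; congr 1; ring
  rw [h2]
  simp only [Complex.ofReal_mul, Complex.ofReal_sub, Complex.ofReal_div, Complex.ofReal_pow,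
    Complex.ofReal_zpow, Complex.ofReal_neg, Complex.ofReal_one, Complex.ofReal_intCast]
  linear_combination (1 / ((Real.pi : ℂ) * (k : ℂ))^2) * Complex.ofReal (deriv f (1 - (m:ℝ))) * h1
end

section
/- There exists a constant C > 0 such that for every twice continuously differentiable f : ℝ → ℝ with f and f'' square-integrable on ℝ, sup_{k∈ℤ} (1 + |k|)² ( Σ_{m∈ℤ} | ∫_0^1 f(|2x − 1| − m) e^{−2πi k x} dx |² )^{1/2} ≤ C ( ∫_ℝ f(t)² dt + ∫_ℝ f''(t)² dt )^{1/2}. -/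
open scoped BigOperators ENNReal

open MeasureTheory in
lemma aux_cs_s15 (h : ℝ → ℝ) (hh : Continuous h) :
    (∫ t in (0:ℝ)..1, h t)^2 ≤ ∫ t in (0:ℝ)..1, h t ^ 2 := by
  set c := ∫ t in (0:ℝ)..1, h t with hc
  have h1 : 0 ≤ ∫ t in (0:ℝ)..1, (h t - c)^2 :=
    intervalIntegral.integral_nonneg (by norm_num) (fun t _ => sq_nonneg _)
  have h2 : (∫ t in (0:ℝ)..1, (h t - c)^2) = (∫ t in (0:ℝ)..1, h t ^ 2) - 2 * c * c + c^2 := by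
    have : (fun t => (h t - c)^2) = fun t => (h t ^ 2 - 2 * c * h t) + c^2 := by
      ext t; ring
    rw [this, intervalIntegral.integral_add, intervalIntegral.integral_sub,
      intervalIntegral.integral_const_mul, ← hc]
    · simp
    all_goals exact Continuous.intervalIntegrable (by fun_prop) _ _
  nlinarith

lemma aux_bd (g g' g'' : ℝ → ℝ) (hg : ∀ t, HasDerivAt g (g' t) t)
    (hg' : ∀ t, HasDerivAt g' (g'' t) t) (hc : Continuous g'') (k : ℤ) :
    (1 + |(k:ℝ)|)^4 * (∫ t in (0:ℝ)..1, g t * Real.cos (Real.pi * k * t))^2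
      ≤ 288 * ∫ t in (0:ℝ)..1, (g t ^ 2 + g'' t ^ 2) := by
  have cg : Continuous g := continuous_iff_continuousAt.2 fun t => (hg t).continuousAt
  have cg' : Continuous g' := continuous_iff_continuousAt.2 fun t => (hg' t).continuousAt
  set I := ∫ t in (0:ℝ)..1, g t * Real.cos (Real.pi * k * t) with hI
  have hint : ∀ u : ℝ → ℝ, Continuous u → IntervalIntegrable u MeasureTheory.volume 0 1 :=
    fun u hu => hu.intervalIntegrable _ _
  have key : ∀ h : ℝ → ℝ, Continuous h →
      (∀ t ∈ Set.Icc (0:ℝ) 1, h t ^ 2 ≤ 288 * (g t ^ 2 + g'' t ^ 2)) →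
      (∫ t in (0:ℝ)..1, h t)^2 ≤ 288 * ∫ t in (0:ℝ)..1, (g t ^ 2 + g'' t ^ 2) := by
    intro h hh hb
    refine (aux_cs_s15 h hh).trans ?_
    rw [← intervalIntegral.integral_const_mul]
    exact intervalIntegral.integral_mono_on (by norm_num) (hint _ (by fun_prop))
      (hint _ (by fun_prop)) hb
  rcases eq_or_ne k 0 with rfl | hk
  · simp only [Int.cast_zero, abs_zero, add_zero, one_pow, one_mul]
    apply key
    · fun_prop
    · intro t _
      simp
      nlinarith [sq_nonneg (g t), sq_nonneg (g'' t)]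
  · set a := Real.pi * (k:ℝ) with ha
    set e := Real.cos a with he
    have hs : Real.sin a = 0 := by
      rw [ha, mul_comm]; exact Real.sin_int_mul_pi k
    have he1 : |e| ≤ 1 := Real.abs_cos_le_one _
    have ftc : ∫ t in (0:ℝ)..1, (g t * (a^2 * Real.cos (a * t) + (e-1)*(6-12*t))
        - g'' t * (-Real.cos (a*t) + 1 + (e-1)*(3*t^2-2*t^3))) = 0 := by
      rw [intervalIntegral.integral_eq_sub_of_hasDerivAt
        (f := fun t => g t * (a * Real.sin (a*t) + (e-1)*(6*t-6*t^2))
          - g' t * (-Real.cos (a*t) + 1 + (e-1)*(3*t^2-2*t^3)))]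
      · simp [hs, ← he]
        right; ring
      · intro t _
        have hat : HasDerivAt (fun t : ℝ => a * t) a t := by
          simpa using (hasDerivAt_id t).const_mul a
        have p2 : HasDerivAt (fun t : ℝ => t^2) (2*t) t := by simpa using hasDerivAt_pow 2 t
        have p3 : HasDerivAt (fun t : ℝ => t^3) (3*t^2) t := by simpa using hasDerivAt_pow 3 t
        have d1 := (hat.sin.const_mul a).add
          ((((hasDerivAt_id t).const_mul 6).sub (p2.const_mul 6)).const_mul (e-1))
        have d2 := (hat.cos.neg.add_const 1).add
          (((p2.const_mul 3).sub (p3.const_mul 2)).const_mul (e-1))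
        have := ((hg t).mul d1).sub ((hg' t).mul d2)
        refine this.congr_deriv ?_
        simp
        ring
      · exact hint _ (by fun_prop)
    have hI2 : a^2 * I = ∫ t in (0:ℝ)..1, (g'' t * (-Real.cos (a*t) + 1 + (e-1)*(3*t^2-2*t^3))
        - g t * ((e-1)*(6-12*t))) := by
      rw [hI, ← intervalIntegral.integral_const_mul, ← sub_eq_zero,
        ← intervalIntegral.integral_sub (hint _ (by fun_prop)) (hint _ (by fun_prop)), ← ftc]
      congr 1; ext t; ring
    have hb : (a^2 * I)^2 ≤ 288 * ∫ t in (0:ℝ)..1, (g t ^ 2 + g'' t ^ 2) := by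
      rw [hI2]
      apply key _ (by fun_prop)
      rintro t ⟨t0, t1⟩
      have q0 : 0 ≤ 3*t^2-2*t^3 := by nlinarith [sq_nonneg t]
      have q1 : 3*t^2-2*t^3 ≤ 1 := by nlinarith [mul_nonneg (sq_nonneg (1-t)) (by linarith : 0 ≤ 1+2*t)]
      obtain ⟨e0, e1⟩ := abs_le.1 he1
      obtain ⟨c0, c1⟩ := abs_le.1 (Real.abs_cos_le_one (a*t))
      set q := 3*t^2-2*t^3
      set c := Real.cos (a*t)
      have w : |-c + 1 + (e-1)*q| ≤ 2 := abs_le.2 ⟨by nlinarith, by nlinarith⟩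
      have v : |(e-1)*(6-12*t)| ≤ 12 := abs_le.2 ⟨by nlinarith, by nlinarith⟩
      set W := -c + 1 + (e-1)*q
      set V := (e-1)*(6-12*t)
      have w2 : W^2 ≤ 4 := by have := sq_le_sq' (abs_le.1 w).1 (abs_le.1 w).2; linarith
      have v2 : V^2 ≤ 144 := by have := sq_le_sq' (abs_le.1 v).1 (abs_le.1 v).2; linarith
      have := mul_le_mul_of_nonneg_left w2 (sq_nonneg (g'' t))
      have := mul_le_mul_of_nonneg_left v2 (sq_nonneg (g t))
      nlinarith [sq_nonneg (g'' t * W + g t * V), sq_nonneg (g'' t)]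
    refine le_trans ?_ hb
    have hk1 : 1 ≤ |(k:ℝ)| := by exact_mod_cast Int.one_le_abs hk
    have h4 : (1 + |(k:ℝ)|)^2 ≤ a^2 := by
      rw [ha, mul_pow, ← sq_abs (k:ℝ)]
      have : 3 < Real.pi := Real.pi_gt_three
      have : 9 * |(k:ℝ)|^2 ≤ Real.pi^2 * |(k:ℝ)|^2 := by gcongr; nlinarith
      nlinarith
    have h5 : ((1 + |(k:ℝ)|)^2)^2 ≤ (a^2)^2 := by gcongr
    rw [mul_pow]
    calc _ = ((1 + |(k:ℝ)|)^2)^2 * I^2 := by ring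
      _ ≤ _ := by gcongr

lemma aux_split (h : ℝ → ℂ) (hh : Continuous h) :
    ∫ x in (0:ℝ)..1, h x = (1/2 : ℂ) * ∫ u in (0:ℝ)..1, (h (1/2 + u/2) + h (1/2 - u/2)) := by
  have i : ∀ (h : ℝ → ℂ) (a b : ℝ), Continuous h → IntervalIntegrable h MeasureTheory.volume a b :=
    fun h a b hh => hh.intervalIntegrable _ _
  rw [intervalIntegral.integral_add (i _ _ _ (by fun_prop)) (i _ _ _ (by fun_prop)),
    intervalIntegral.integral_comp_add_div h (by norm_num),
    intervalIntegral.integral_comp_sub_div h (by norm_num),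
    ← intervalIntegral.integral_add_adjacent_intervals (i h 0 (1/2) hh) (i h (1/2) 1 hh)]
  norm_num
  ring

lemma aux_tent (g : ℝ → ℝ) (hg : Continuous g) (k : ℤ) :
    ‖∫ x in (0:ℝ)..1, (g |2*x - 1| : ℂ) *
        Complex.exp (-2 * (Real.pi : ℂ) * Complex.I * (k : ℂ) * (x : ℂ))‖^2
      = (∫ t in (0:ℝ)..1, g t * Real.cos (Real.pi * k * t))^2 := by
  rw [aux_split _ (by fun_prop)]
  have : ∫ u in (0:ℝ)..1, (((g |2*(1/2+u/2) - 1| : ℝ) : ℂ) *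
        Complex.exp (-2 * (Real.pi : ℂ) * Complex.I * (k : ℂ) * ((1/2+u/2 : ℝ) : ℂ))
        + ((g |2*(1/2-u/2) - 1| : ℝ) : ℂ) *
        Complex.exp (-2 * (Real.pi : ℂ) * Complex.I * (k : ℂ) * ((1/2-u/2 : ℝ) : ℂ)))
      = ∫ u in (0:ℝ)..1, (2 * Complex.exp ((-(Real.pi * k) : ℝ) * Complex.I)) *
          ((g u * Real.cos (Real.pi * k * u) : ℝ) : ℂ) := by
    apply intervalIntegral.integral_congr
    intro u hu
    rw [Set.uIcc_of_le (by norm_num)] at hu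
    have a1 : |2*(1/2+u/2) - 1| = u := by
      rw [show 2*(1/2+u/2) - 1 = u by ring, abs_of_nonneg hu.1]
    have a2 : |2*(1/2-u/2) - 1| = u := by
      rw [show 2*(1/2-u/2) - 1 = -u by ring, abs_neg, abs_of_nonneg hu.1]
    simp only [a1, a2]
    rw [show -2 * (Real.pi : ℂ) * Complex.I * (k : ℂ) * ((1/2+u/2 : ℝ) : ℂ)
        = (-(Real.pi * k) : ℝ) * Complex.I + -((Real.pi * k * u : ℝ) : ℂ) * Complex.I by
          push_cast; ring,
      show -2 * (Real.pi : ℂ) * Complex.I * (k : ℂ) * ((1/2-u/2 : ℝ) : ℂ)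
        = (-(Real.pi * k) : ℝ) * Complex.I + ((Real.pi * k * u : ℝ) : ℂ) * Complex.I by
          push_cast; ring, Complex.exp_add, Complex.exp_add, Complex.ofReal_mul (g u),
          Complex.ofReal_cos, Complex.cos]
    ring
  rw [this, intervalIntegral.integral_const_mul, intervalIntegral.integral_ofReal]
  rw [norm_mul, norm_mul, norm_mul, Complex.norm_exp_ofReal_mul_I, Complex.norm_real]
  norm_num
  rw [← mul_assoc]
  norm_num

/-- one-dimensional `E²(ℝ)` embedding: there is `C > 0` such that for all
`f ∈ C²(ℝ)` with `f, f'' ∈ L²(ℝ)`,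
`sup_{k∈ℤ} (1+|k|)² (Σ_{m∈ℤ} |∫₀¹ f(|2x−1|−m)e^{−2πikx} dx|²)^{1/2}
≤ C (∫_ℝ f² + ∫_ℝ f''²)^{1/2}` (the inner sum taken in `[0,∞]`). -/
theorem E2_norm_le_H2_norm :
    ∃ C : ℝ, 0 < C ∧ ∀ f : ℝ → ℝ, ContDiff ℝ 2 f →
      MeasureTheory.Integrable (fun t => f t ^ 2) →
      MeasureTheory.Integrable (fun t => (iteratedDeriv 2 f t)^2) →
      ∀ k : ℤ,
        ENNReal.ofReal ((1 + |(k:ℝ)|)^2) *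
            (∑' m : ℤ, ENNReal.ofReal
              (‖∫ x in (0:ℝ)..1, (f (|2*x - 1| - (m:ℝ)) : ℂ) *
                  Complex.exp (-2 * (Real.pi : ℂ) * Complex.I * (k : ℂ) * (x : ℂ))‖^2))
                ^ (1/2 : ℝ)
          ≤ ENNReal.ofReal
              (C * Real.sqrt ((∫ t : ℝ, f t ^ 2) + ∫ t : ℝ, (iteratedDeriv 2 f t)^2)) := by
  refine ⟨17, by norm_num, ?_⟩
  intro f hf hi0 hi2 k
  have hd2 : iteratedDeriv 2 f = deriv (deriv f) := by
    rw [iteratedDeriv_succ, iteratedDeriv_one]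
  rw [hd2] at hi2 ⊢
  have hf1 : ContDiff ℝ 1 (deriv f) := by
    have : ContDiff ℝ (1 + 1) f := by simpa [one_add_one_eq_two] using hf
    exact (contDiff_succ_iff_deriv.1 this).2.2
  have hD0 : Differentiable ℝ f := hf.differentiable (by norm_num)
  have hD1 : Differentiable ℝ (deriv f) := hf1.differentiable (by norm_num)
  have hC2 : Continuous (deriv (deriv f)) := hf1.continuous_deriv (by norm_num)
  set A := (1 + |(k:ℝ)|)^2 with hA
  have hApos : 0 < A := by positivity
  rw [← MeasureTheory.integral_add hi0 hi2]
  set G : ℝ → ℝ := fun t => f t ^ 2 + deriv (deriv f) t ^ 2 with hG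
  have hGi : MeasureTheory.Integrable G := hi0.add hi2
  have hsum : HasSum (fun m : ℤ => ∫ t in (0:ℝ)..1, G (t - m)) (∫ t, G t) := by
    have := hGi.hasSum_intervalIntegral_comp_add_int
    rw [← (Equiv.neg ℤ).hasSum_iff] at this
    simpa [Function.comp_def, sub_eq_add_neg] using this
  set S := ∫ t, G t with hS
  have hS0 : 0 ≤ S := MeasureTheory.integral_nonneg (fun t => by positivity)
  have hterm : ∀ m : ℤ, ‖∫ x in (0:ℝ)..1, (f (|2*x - 1| - (m:ℝ)) : ℂ) *
      Complex.exp (-2 * (Real.pi : ℂ) * Complex.I * (k : ℂ) * (x : ℂ))‖^2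
      ≤ 288 / A^2 * ∫ t in (0:ℝ)..1, G (t - m) := by
    intro m
    rw [aux_tent (fun t => f (t - m)) (hf.continuous.comp (by fun_prop)) k]
    have := aux_bd (fun t => f (t - m)) (fun t => deriv f (t - m)) (fun t => deriv (deriv f) (t - m))
      (fun t => (hD0 _).hasDerivAt.comp_sub_const t m)
      (fun t => (hD1 _).hasDerivAt.comp_sub_const t m) (hC2.comp (by fun_prop)) k
    rw [div_mul_eq_mul_div, le_div_iff₀ (by positivity)]
    refine le_trans (le_of_eq ?_) this
    rw [hA]; ring
  have hsum2 := hsum.mul_left (288 / A^2)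
  have htot : (∑' m : ℤ, ENNReal.ofReal
      (‖∫ x in (0:ℝ)..1, (f (|2*x - 1| - (m:ℝ)) : ℂ) *
        Complex.exp (-2 * (Real.pi : ℂ) * Complex.I * (k : ℂ) * (x : ℂ))‖^2))
      ≤ ENNReal.ofReal (288 / A^2 * S) := by
    rw [← hsum2.tsum_eq, ENNReal.ofReal_tsum_of_nonneg _ hsum2.summable]
    · exact ENNReal.tsum_le_tsum fun m => ENNReal.ofReal_le_ofReal (hterm m)
    · intro m
      exact le_trans (by positivity) (hterm m)
  calc _ ≤ ENNReal.ofReal A * (ENNReal.ofReal (288 / A^2 * S)) ^ (1/2 : ℝ) := by gcongr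
    _ = ENNReal.ofReal (A * Real.sqrt (288 / A^2 * S)) := by
      rw [ENNReal.ofReal_rpow_of_nonneg (by positivity) (by norm_num), ← Real.sqrt_eq_rpow,
        ENNReal.ofReal_mul hApos.le]
    _ ≤ _ := by
      apply ENNReal.ofReal_le_ofReal
      have e1 : A * Real.sqrt (288 / A^2 * S) = Real.sqrt (288 * S) := by
        rw [← Real.sqrt_sq hApos.le, ← Real.sqrt_mul (by positivity), Real.sqrt_sq hApos.le]
        congr 1; field_simp
      have e2 : 17 * Real.sqrt S = Real.sqrt (289 * S) := by
        rw [Real.sqrt_mul (by norm_num), show (289:ℝ) = 17^2 by norm_num,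
          Real.sqrt_sq (by norm_num)]
      rw [e1, e2]
      apply Real.sqrt_le_sqrt
      linarith
end
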